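/- arXiv:1904.03592 — 5 statements merged into one kernel-verified Lean document; each statement's English description precedes it below -/
import Mathlib

section
/- Let G ∈ M_t(ℝ[x]) be a matrix polynomial of degree d whose leading coefficient G_d is positive definite. If G(x) is positive definite for all x ∈ [0, +∞), then there exist a positive integer N and positive definite matrices H_i ∈ M_t(ℝ), i = 0, …, N+d, such that (1+x)^N G(x) = Σ_{i=0}^{N+d} H_i x^i. -/
/-- The `i`-th coefficient matrix of a univariate matrix polynomial. -/
noncomputable def coeffMatrix {t : ℕ} (G : Matrix (Fin t) (Fin t) (Polynomial ℝ)) (i : ℕ) :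
    Matrix (Fin t) (Fin t) ℝ :=
  Matrix.of fun a b => (G a b).coeff i

open Polynomial in
/-- The scalar polynomial `vᵀ G v`. -/
noncomputable def quadPoly {t : ℕ} (G : Matrix (Fin t) (Fin t) (Polynomial ℝ)) (v : Fin t → ℝ) :
    Polynomial ℝ := ∑ a, ∑ b, C (v a * v b) * G a b

theorem quadPoly_coeff_mul {t : ℕ} (G : Matrix (Fin t) (Fin t) (Polynomial ℝ)) (v : Fin t → ℝ)
    (P : Polynomial ℝ) (i : ℕ) :
    v ⬝ᵥ (coeffMatrix (P • G) i).mulVec v = (P * quadPoly G v).coeff i := by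
  simp only [quadPoly, dotProduct, Matrix.mulVec, coeffMatrix, Matrix.of_apply, Matrix.smul_apply,
    smul_eq_mul, Finset.mul_sum, Polynomial.finsetSum_coeff]
  refine Finset.sum_congr rfl fun a _ => Finset.sum_congr rfl fun b _ => ?_
  rw [mul_left_comm P, Polynomial.coeff_C_mul]
  ring

theorem quadPoly_eval {t : ℕ} (G : Matrix (Fin t) (Fin t) (Polynomial ℝ)) (v : Fin t → ℝ)
    (x : ℝ) :
    (quadPoly G v).eval x = v ⬝ᵥ (G.map (Polynomial.eval x)).mulVec v := by
  simp only [quadPoly, dotProduct, Matrix.mulVec, Matrix.map_apply,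
    Finset.mul_sum, Polynomial.eval_finsetSum, Polynomial.eval_mul, Polynomial.eval_C]
  refine Finset.sum_congr rfl fun a _ => Finset.sum_congr rfl fun b _ => ?_
  ring

theorem quadPoly_smul {t : ℕ} (G : Matrix (Fin t) (Fin t) (Polynomial ℝ)) (v : Fin t → ℝ)
    (c : ℝ) : quadPoly G (c • v) = Polynomial.C (c ^ 2) * quadPoly G v := by
  simp only [quadPoly, Finset.mul_sum]
  refine Finset.sum_congr rfl fun a _ => Finset.sum_congr rfl fun b _ => ?_
  simp only [Pi.smul_apply, smul_eq_mul, ← mul_assoc, ← Polynomial.C_mul]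
  congr 2
  ring

theorem quadPoly_natDegree {t : ℕ} (G : Matrix (Fin t) (Fin t) (Polynomial ℝ)) (v : Fin t → ℝ)
    (d : ℕ) (h : ∀ i j, (G i j).natDegree ≤ d) : (quadPoly G v).natDegree ≤ d := by
  refine Polynomial.natDegree_sum_le_of_forall_le _ _ fun a _ =>
    Polynomial.natDegree_sum_le_of_forall_le _ _ fun b _ => ?_
  exact (Polynomial.natDegree_C_mul_le _ _).trans (h a b)

theorem quadPoly_coeff_continuous {t : ℕ} (G : Matrix (Fin t) (Fin t) (Polynomial ℝ)) (k : ℕ) :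
    Continuous fun v : Fin t → ℝ => (quadPoly G v).coeff k := by
  simp only [quadPoly, Polynomial.finsetSum_coeff, Polynomial.coeff_C_mul]
  fun_prop

theorem cast_descFactorial_prod (i k : ℕ) :
    ((i.descFactorial k : ℕ) : ℝ) = ∏ j ∈ Finset.range k, ((i : ℝ) - j) := by
  induction k with
  | zero => simp
  | succ k ih =>
    rw [Finset.prod_range_succ, ← ih, Nat.descFactorial_succ]
    rcases le_or_gt k i with h | h
    · push_cast [Nat.cast_sub h]; ring
    · rw [Nat.descFactorial_of_lt h]; simp

/-- Deformed monomials. -/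
noncomputable def defMon (k : ℕ) (u e : ℝ) : ℝ := ∏ j ∈ Finset.range k, (u - j * e)

theorem defMon_scaled (i k n : ℕ) (hn : 0 < n) :
    ((i.descFactorial k : ℕ) : ℝ) = (n : ℝ) ^ k * defMon k (i / n) (1 / n) := by
  have hn' : (n : ℝ) ≠ 0 := by positivity
  rw [cast_descFactorial_prod, defMon, ← Finset.card_range k, ← Finset.prod_const,
    Finset.card_range, ← Finset.prod_mul_distrib]
  refine Finset.prod_congr rfl fun j _ => ?_
  field_simp

theorem choose_identity (N d i k : ℕ) (hk : k ≤ d) (hi : i ≤ N + d) :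
    i.factorial * (N + d - i).factorial * (if k ≤ i then N.choose (i - k) else 0) =
      N.factorial * (i.descFactorial k * (N + d - i).descFactorial (d - k)) := by
  split_ifs with h
  · rcases le_or_gt (i - k) N with h2 | h2
    · have e1 := Nat.factorial_mul_descFactorial h
      have e2 : d - k ≤ N + d - i := by omega
      have e3 := Nat.factorial_mul_descFactorial e2
      have e4 := Nat.choose_mul_factorial_mul_factorial h2
      have e5 : N + d - i - (d - k) = N - (i - k) := by omega
      rw [e5] at e3
      rw [← e1, ← e3, ← e4]
      ring
    · rw [Nat.choose_eq_zero_of_lt h2, Nat.descFactorial_of_lt (n := N + d - i) (by omega)]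
      simp
  · rw [Nat.descFactorial_of_lt (n := i) (by omega)]
    simp

theorem coeff_formula (p : Polynomial ℝ) (N d i : ℕ) (hp : p.natDegree ≤ d) :
    ((1 + Polynomial.X) ^ N * p).coeff i =
      ∑ k ∈ Finset.range (d + 1), p.coeff k * ((if k ≤ i then N.choose (i - k) else 0 : ℕ) : ℝ) := by
  conv_lhs => rw [p.as_sum_range' (d + 1) (by omega), Finset.mul_sum, Polynomial.finsetSum_coeff]
  refine Finset.sum_congr rfl fun k _ => ?_
  rw [← Polynomial.C_mul_X_pow_eq_monomial, mul_left_comm, Polynomial.coeff_C_mul,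
    Polynomial.coeff_mul_X_pow']
  split_ifs
  · rw [Polynomial.coeff_one_add_X_pow]
  · simp

theorem coeff_scaled (p : Polynomial ℝ) (N d i : ℕ) (hp : p.natDegree ≤ d) (hN : 0 < N)
    (hi : i ≤ N + d) :
    (i.factorial : ℝ) * (N + d - i).factorial * ((1 + Polynomial.X) ^ N * p).coeff i =
      N.factorial * ((N + d : ℕ) : ℝ) ^ d * ∑ k ∈ Finset.range (d + 1), p.coeff k *
        (defMon k ((i : ℝ) / (N + d : ℕ)) (1 / (N + d : ℕ)) *
          defMon (d - k) (1 - (i : ℝ) / (N + d : ℕ)) (1 / (N + d : ℕ))) := by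
  rw [coeff_formula p N d i hp, Finset.mul_sum, Finset.mul_sum]
  refine Finset.sum_congr rfl fun k hk => ?_
  have hk : k ≤ d := by simpa [Nat.lt_succ_iff] using hk
  have h := congrArg (Nat.cast : ℕ → ℝ) (choose_identity N d i k hk hi)
  rw [Nat.cast_mul, Nat.cast_mul, Nat.cast_mul, Nat.cast_mul,
    defMon_scaled i k (N + d) (by omega), defMon_scaled (N + d - i) (d - k) (N + d) (by omega)] at h
  have h1 : ((N + d - i : ℕ) : ℝ) / (N + d : ℕ) = 1 - (i : ℝ) / (N + d : ℕ) := by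
    have : ((N + d : ℕ) : ℝ) ≠ 0 := by
      have : 0 < N + d := by omega
      positivity
    rw [Nat.cast_sub hi]
    field_simp
  rw [h1] at h
  have h2 : ((N + d : ℕ) : ℝ) ^ d = ((N + d : ℕ) : ℝ) ^ k * ((N + d : ℕ) : ℝ) ^ (d - k) := by
    rw [← pow_add]; congr 1; omega
  rw [h2]
  linear_combination p.coeff k * h

theorem hom_pos (p : Polynomial ℝ) (d : ℕ) (hp : p.natDegree ≤ d) (hd : 0 < p.coeff d)
    (hpos : ∀ x : ℝ, 0 ≤ x → 0 < p.eval x) (u : ℝ) (hu : u ∈ Set.Icc (0 : ℝ) 1) :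
    0 < ∑ k ∈ Finset.range (d + 1), p.coeff k * (defMon k u 0 * defMon (d - k) (1 - u) 0) := by
  simp only [defMon, mul_zero, sub_zero, Finset.prod_const, Finset.card_range]
  rcases eq_or_lt_of_le hu.2 with h | h
  · subst h
    rw [Finset.sum_eq_single d]
    · simpa using hd
    · intro k hk hkd
      have : d - k ≠ 0 := by
        have := Finset.mem_range.1 hk
        omega
      simp [this]
    · simp
  · have h1 : 0 < 1 - u := by linarith
    have h2 := hpos (u / (1 - u)) (div_nonneg hu.1 h1.le)
    rw [Polynomial.eval_eq_sum_range' (n := d + 1) (by omega)] at h2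
    have h3 := mul_pos (pow_pos h1 d) h2
    rw [Finset.mul_sum] at h3
    refine h3.trans_eq (Finset.sum_congr rfl fun k hk => ?_)
    have hk : k ≤ d := by simpa [Nat.lt_succ_iff] using hk
    have h4 : (1 - u) ^ d = (1 - u) ^ k * (1 - u) ^ (d - k) := by
      rw [← pow_add]; congr 1; omega
    rw [h4, div_pow]
    field_simp

theorem exists_eps {t : ℕ} (d : ℕ) (G : Matrix (Fin t) (Fin t) (Polynomial ℝ))
    (h0 : ∀ v : Fin t → ℝ, v ≠ 0 → ∀ u ∈ Set.Icc (0 : ℝ) 1,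
      0 < ∑ k ∈ Finset.range (d + 1), (quadPoly G v).coeff k *
        (defMon k u 0 * defMon (d - k) (1 - u) 0)) :
    ∀ᶠ e in nhds (0 : ℝ), ∀ q ∈ Set.Icc (0 : ℝ) 1 ×ˢ Metric.sphere (0 : Fin t → ℝ) 1,
      0 < ∑ k ∈ Finset.range (d + 1), (quadPoly G q.2).coeff k *
        (defMon k q.1 e * defMon (d - k) (1 - q.1) e) := by
  have hK : IsCompact (Set.Icc (0 : ℝ) 1 ×ˢ Metric.sphere (0 : Fin t → ℝ) 1) :=
    isCompact_Icc.prod (isCompact_sphere _ _)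
  refine hK.eventually_forall_of_forall_eventually fun q hq => ?_
  have hc : Continuous fun z : ℝ × (ℝ × (Fin t → ℝ)) =>
      ∑ k ∈ Finset.range (d + 1), (quadPoly G z.2.2).coeff k *
        (defMon k z.2.1 z.1 * defMon (d - k) (1 - z.2.1) z.1) := by
    refine continuous_finsetSum _ fun k _ => ?_
    refine ((quadPoly_coeff_continuous G k).comp (by fun_prop)).mul ?_
    unfold defMon
    fun_prop
  have hv : q.2 ≠ 0 := by
    intro h
    have := hq.2
    simp [h] at this
  exact hc.continuousAt.eventually (lt_mem_nhds (h0 q.2 hv q.1 hq.1))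

/-- if `G` has degree `d` with positive definite leading coefficient and
`G(x) ≻ 0` for all `x ∈ [0,∞)`, then for some `N ≥ 1`,
`(1+x)^N G(x) = Σ_{i=0}^{N+d} Hᵢ xⁱ` with all `Hᵢ` positive definite. -/
theorem posDef_on_nonneg_rep (t d : ℕ)
    (G : Matrix (Fin t) (Fin t) (Polynomial ℝ))
    (hdegle : ∀ i j, (G i j).natDegree ≤ d)
    (hld : (coeffMatrix G d).PosDef)
    (hpos : ∀ x : ℝ, 0 ≤ x → (G.map (Polynomial.eval x)).PosDef) :
    ∃ N : ℕ, 0 < N ∧ ∃ H : ℕ → Matrix (Fin t) (Fin t) ℝ,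
      (∀ i ∈ Finset.range (N + d + 1), (H i).PosDef) ∧
      (((1 + Polynomial.X) ^ N : Polynomial ℝ)) • G =
        ∑ i ∈ Finset.range (N + d + 1),
          ((Polynomial.X ^ i : Polynomial ℝ)) • (H i).map Polynomial.C := by
  have hsymm : ∀ a b, G a b = G b a := by
    intro a b
    refine Polynomial.eq_of_infinite_eval_eq _ _ ((Set.Ici_infinite (0 : ℝ)).mono fun x hx => ?_)
    have := (hpos x hx).isHermitian.apply b a
    simpa using this
  have hev := exists_eps d G fun v hv u hu => by
    refine hom_pos _ d (quadPoly_natDegree G v d hdegle) ?_ ?_ u hu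
    · have := quadPoly_coeff_mul G v 1 d
      rw [one_smul, one_mul] at this
      rw [← this]
      simpa using hld.dotProduct_mulVec_pos hv
    · intro x hx
      rw [quadPoly_eval]
      simpa using (hpos x hx).dotProduct_mulVec_pos hv
  have hev2 := (tendsto_one_div_atTop_nhds_zero_nat (𝕜 := ℝ)).eventually hev
  obtain ⟨N, hN⟩ := Filter.eventually_atTop.1 hev2
  refine ⟨N + 1, by omega, fun i => coeffMatrix (((1 + Polynomial.X) ^ (N + 1) : Polynomial ℝ) • G) i,
    ?_, ?_⟩
  · intro i hi
    have hi : i ≤ N + 1 + d := by simpa [Nat.lt_succ_iff] using hi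
    refine Matrix.PosDef.of_dotProduct_mulVec_pos ?_ ?_
    · ext a b
      simp [coeffMatrix, hsymm a b]
    · intro v hv
      have hv' : 0 < ‖v‖ := norm_pos_iff.2 hv
      obtain ⟨w, hw, hvw⟩ : ∃ w : Fin t → ℝ, w ∈ Metric.sphere (0 : Fin t → ℝ) 1 ∧ v = ‖v‖ • w := by
        refine ⟨‖v‖⁻¹ • v, ?_, ?_⟩
        · simp [norm_smul, hv'.ne']
        · rw [smul_smul, mul_inv_cancel₀ hv'.ne', one_smul]
      have key := hN (N + 1 + d) (by omega) ((i : ℝ) / (N + 1 + d : ℕ), w)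
        ⟨⟨by positivity, div_le_one_of_le₀ (by exact_mod_cast hi) (by positivity)⟩, hw⟩
      have hs := coeff_scaled (quadPoly G w) (N + 1) d i (quadPoly_natDegree G w d hdegle)
        (by omega) hi
      have hpos2 : 0 < ((1 + Polynomial.X) ^ (N + 1) * quadPoly G w).coeff i := by
        have hr : 0 < (i.factorial : ℝ) * (N + 1 + d - i).factorial *
            ((1 + Polynomial.X) ^ (N + 1) * quadPoly G w).coeff i := by
          rw [hs]
          refine mul_pos (mul_pos (by positivity) (pow_pos ?_ d)) key
          have : 0 < N + 1 + d := by omega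
          positivity
        exact pos_of_mul_pos_right hr (by positivity)
      rw [star_trivial, quadPoly_coeff_mul, hvw, quadPoly_smul, mul_left_comm,
        Polynomial.coeff_C_mul]
      positivity
  · ext1 a b
    rw [Matrix.sum_apply]
    simp only [Matrix.smul_apply, Matrix.map_apply, coeffMatrix, Matrix.of_apply, smul_eq_mul]
    have hdeg : ((1 + Polynomial.X) ^ (N + 1) * G a b).natDegree < N + 1 + d + 1 := by
      have h1 : ((1 + Polynomial.X : Polynomial ℝ) ^ (N + 1)).natDegree ≤ N + 1 := by
        have h0 : (1 + Polynomial.X : Polynomial ℝ).natDegree ≤ 1 := by compute_degree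
        exact (Polynomial.natDegree_pow_le_of_le (N + 1) h0).trans (by omega)
      have h2 := Polynomial.natDegree_mul_le
        (p := (1 + Polynomial.X : Polynomial ℝ) ^ (N + 1)) (q := G a b)
      have := hdegle a b
      omega
    conv_lhs => rw [Polynomial.as_sum_range' _ _ hdeg]
    refine Finset.sum_congr rfl fun k _ => ?_
    rw [← Polynomial.C_mul_X_pow_eq_monomial, mul_comm]
end

section
/- Let S = (S_i)_{i ∈ ℕ₀} be a sequence of symmetric matrices in M_t(ℝ). Then S is a matrix-valued [-1,1]-moment sequence if and only if Σ_{i=0}^{k} Σ_{j=0}^{l} (-1)^j C(k,i) C(l,j) tr(G S_{i+j}) ≥ 0 for all positive definite matrices G ∈ M_t(ℝ) and all k, l ∈ ℕ₀, where C(k,i) denotes the binomial coefficient. -/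
open MeasureTheory

/-- Integral of a real function against a finite signed measure (via Jordan decomposition). -/
noncomputable def sInt {α : Type*} [MeasurableSpace α] (s : SignedMeasure α) (f : α → ℝ) : ℝ :=
  (∫ x, f x ∂s.toJordanDecomposition.posPart) - ∫ x, f x ∂s.toJordanDecomposition.negPart

/-- A matrix-valued measure (a `t × t` matrix of finite signed Borel measures on `ℝ`)
is positive semidefinite if its value on every Borel set is a positive semidefinite matrix. -/
def IsPSDMatMeas {t : ℕ} (E : Fin t → Fin t → SignedMeasure ℝ) : Prop :=
  ∀ A : Set ℝ, MeasurableSet A → (Matrix.of fun i j => E i j A).PosSemidef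

/-- The support of the matrix-valued measure `E` is contained in the closed set `K`:
each entry (as a signed measure) vanishes in total variation outside of `K`. -/
def SuppSubset {t : ℕ} (E : Fin t → Fin t → SignedMeasure ℝ) (K : Set ℝ) : Prop :=
  ∀ i j, (E i j).totalVariation Kᶜ = 0


/-- `S` is a matrix-valued `K`-moment sequence: there is a positive semidefinite matrix-valued
measure `E` supported in `K` with `Sᵢ = ∫ xⁱ dE(x)` entrywise. -/
def IsMatMomentSeq {t : ℕ} (S : ℕ → Matrix (Fin t) (Fin t) ℝ) (K : Set ℝ) : Prop :=
  ∃ E : Fin t → Fin t → SignedMeasure ℝ, IsPSDMatMeas E ∧ SuppSubset E K ∧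
    ∀ (k : ℕ) i j, S k i j = sInt (E i j) fun x => x ^ k

theorem hm_ratio_step (n k m : ℕ) (hn : m < n) (hk : k ≤ n) :
    |((k - m : ℕ) : ℝ) / ((n - m : ℕ) : ℝ) - (k : ℝ) / n| ≤ (m : ℝ) / ((n - m : ℕ) : ℝ) := by
  have h1 : (0 : ℝ) < ((n - m : ℕ) : ℝ) := by exact_mod_cast Nat.sub_pos_of_lt hn
  have h2 : (0 : ℝ) < n := by exact_mod_cast (by omega : 0 < n)
  have hkn : (k : ℝ) ≤ n := by exact_mod_cast hk
  have hm0 : (0 : ℝ) ≤ m := by positivity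
  have hk0 : (0 : ℝ) ≤ k := by positivity
  have hc : ((n - m : ℕ) : ℝ) = n - m := by push_cast [hn.le]; ring
  rw [div_sub_div _ _ h1.ne' h2.ne', abs_div, abs_of_pos (mul_pos h1 h2), div_le_div_iff₀ (mul_pos h1 h2) h1]
  have key : |((k - m : ℕ) : ℝ) * n - ((n - m : ℕ) : ℝ) * k| ≤ m * n := by
    rcases le_total m k with h | h
    · rw [hc]; push_cast [h]
      rw [abs_le]; constructor <;> nlinarith
    · have : (k : ℝ) ≤ m := by exact_mod_cast h
      rw [Nat.sub_eq_zero_of_le h, hc] 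
      rw [hc] at h1
      rw [abs_le]; push_cast; constructor <;> nlinarith
  nlinarith

theorem hm_ratio_close (m : ℕ) : ∀ ε : ℝ, 0 < ε → ∃ N : ℕ, ∀ n ≥ N, ∀ k ≤ n,
    |(k.descFactorial m : ℝ) / (n.descFactorial m : ℝ) - ((k : ℝ) / n) ^ m| ≤ ε := by
  induction m with
  | zero => intro ε hε; exact ⟨0, fun n _ k _ => by simp [hε.le]⟩
  | succ m ih =>
    intro ε hε
    obtain ⟨N, hN⟩ := ih (ε / 2) (by positivity)
    obtain ⟨M, hM⟩ := exists_nat_gt ((m : ℝ) / (ε / 2))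
    refine ⟨N + M + m + 1, fun n hn k hk => ?_⟩
    have hA := hN n (by omega) k hk
    have hB := hm_ratio_step n k m (by omega) hk
    have h1 : (0 : ℝ) < ((n - m : ℕ) : ℝ) := by exact_mod_cast (by omega : 0 < n - m)
    have hB' : (m : ℝ) / ((n - m : ℕ) : ℝ) ≤ ε / 2 := by
      rw [div_le_iff₀ h1]
      rw [div_lt_iff₀ (by positivity)] at hM
      have : (M : ℝ) ≤ ((n - m : ℕ) : ℝ) := by exact_mod_cast (by omega : M ≤ n - m)
      nlinarith
    rw [Nat.descFactorial_succ, Nat.descFactorial_succ, pow_succ]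
    push_cast
    set a := (k.descFactorial m : ℝ) / (n.descFactorial m : ℝ) with ha
    set r := ((k - m : ℕ) : ℝ) / ((n - m : ℕ) : ℝ) with hr
    set y := (k : ℝ) / n with hy
    have hn0 : (0 : ℝ) < n := by exact_mod_cast (by omega : 0 < n)
    have e : ((k - m : ℕ) : ℝ) * (k.descFactorial m : ℝ) / (((n - m : ℕ) : ℝ) * (n.descFactorial m : ℝ)) = a * r := by
      rw [ha, hr, div_mul_div_comm]; ring
    have hr0 : 0 ≤ r := by positivity
    have hr1 : r ≤ 1 := by
      rw [hr, div_le_one h1]; exact_mod_cast Nat.sub_le_sub_right hk m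
    have hy0 : 0 ≤ y := by positivity
    have hy1 : y ≤ 1 := by rw [hy, div_le_one hn0]; exact_mod_cast hk
    have hym : y ^ m ≤ 1 := pow_le_one₀ hy0 hy1
    have hym0 : 0 ≤ y ^ m := by positivity
    rw [e]
    have : a * r - y ^ m * y = (a - y ^ m) * r + y ^ m * (r - y) := by ring
    rw [this]
    refine (abs_add_le _ _).trans ?_
    rw [abs_mul, abs_mul, abs_of_nonneg hr0, abs_of_nonneg hym0]
    nlinarith [abs_nonneg (a - y ^ m), abs_nonneg (r - y)]

theorem hm_bern_id {R : Type*} [CommRing R] (a b : R) (hab : a + b = 1) (n m : ℕ) (h : m ≤ n) :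
    (n.choose m : R) * a ^ m =
      ∑ k ∈ Finset.range (n + 1), (k.choose m : R) * ((n.choose k : R) * (a ^ k * b ^ (n - k))) := by
  obtain ⟨d, rfl⟩ := Nat.exists_eq_add_of_le h
  rw [show m + d + 1 = m + (d + 1) by ring, Finset.sum_range_add]
  rw [Finset.sum_eq_zero (s := Finset.range m), zero_add]
  swap
  · intro k hk
    rw [Nat.choose_eq_zero_of_lt (Finset.mem_range.1 hk)]; simp
  have : (1 : R) = (a + b) ^ d := by rw [hab, one_pow]
  rw [← mul_one (a ^ m), this, add_pow, Finset.mul_sum, Finset.mul_sum]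
  refine Finset.sum_congr rfl fun k hk => ?_
  have hk' : k ≤ d := by simpa [Nat.lt_succ_iff] using hk
  have hc : (m + d).choose (m + k) * (m + k).choose m = (m + d).choose m * d.choose k := by
    rw [Nat.choose_mul (by omega)]
    congr 2 <;> omega
  have hc' : ((m + d).choose (m + k) : R) * ((m + k).choose m : R) = ((m + d).choose m : R) * (d.choose k : R) := by
    exact_mod_cast congrArg (Nat.cast : ℕ → R) hc
  rw [show m + d - (m + k) = d - k by omega, pow_add]
  linear_combination (-a ^ m * a ^ k * b ^ (d - k)) * hc'

noncomputable def hmL (s : ℕ → ℝ) : Polynomial ℝ →ₗ[ℝ] ℝ :=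
  Polynomial.lsum fun n => s n • LinearMap.id

theorem hmL_pow (s : ℕ → ℝ) (n : ℕ) : hmL s (Polynomial.X ^ n) = s n := by
  rw [hmL, Polynomial.lsum_apply, ← Polynomial.monomial_one_right_eq_X_pow, Polynomial.sum_monomial_index] <;> simp

theorem hmL_prod (s : ℕ → ℝ) (k l : ℕ) :
    hmL s ((1 + Polynomial.X) ^ k * (1 - Polynomial.X) ^ l) =
      ∑ i ∈ Finset.range (k + 1), ∑ j ∈ Finset.range (l + 1),
          (-1 : ℝ) ^ j * (k.choose i : ℝ) * (l.choose j : ℝ) * s (i + j) := by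
  have : ((1 + Polynomial.X) ^ k * (1 - Polynomial.X) ^ l : Polynomial ℝ) = 
      ∑ i ∈ Finset.range (k + 1), ∑ j ∈ Finset.range (l + 1),
          ((-1 : ℝ) ^ j * (k.choose i : ℝ) * (l.choose j : ℝ)) • Polynomial.X ^ (i + j) := by
    rw [add_comm 1, add_pow, sub_eq_neg_add, add_pow, Finset.sum_mul_sum]
    refine Finset.sum_congr rfl fun i _ => Finset.sum_congr rfl fun j _ => ?_
    rw [Polynomial.smul_eq_C_mul, neg_pow]
    simp
    ring
  rw [this]
  simp [map_sum, hmL_pow]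


noncomputable def hmw (s : ℕ → ℝ) (n k : ℕ) : ℝ :=
  (n.choose k : ℝ) * (1 / 2) ^ n *
    hmL s ((1 + Polynomial.X) ^ k * (1 - Polynomial.X) ^ (n - k))

noncomputable def hmA : Polynomial ℝ := Polynomial.C (1 / 2) * (1 + Polynomial.X)

theorem hmL_A_pow (s : ℕ → ℝ) (m n : ℕ) (h : m ≤ n) :
    hmL s (hmA ^ m) = ∑ k ∈ Finset.range (n + 1),
      (k.descFactorial m : ℝ) / (n.descFactorial m : ℝ) * hmw s n k := by
  have hab : hmA + Polynomial.C (1 / 2) * (1 - Polynomial.X) = 1 := by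
    rw [hmA, ← mul_add, show (1 + Polynomial.X + (1 - Polynomial.X) : Polynomial ℝ) = Polynomial.C 2 by
      rw [show (Polynomial.C 2 : Polynomial ℝ) = 2 from rfl]; ring, ← Polynomial.C_mul]
    norm_num
  have key := congrArg (hmL s) (hm_bern_id _ _ hab n m h)
  have e1 : ((n.choose m : Polynomial ℝ) * hmA ^ m) = (n.choose m : ℝ) • hmA ^ m := by
    rw [Polynomial.smul_eq_C_mul]; simp
  rw [e1, map_smul, map_sum, smul_eq_mul] at key
  have hpos : (0 : ℝ) < (n.choose m : ℝ) := by exact_mod_cast Nat.choose_pos h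
  rw [← mul_right_inj' hpos.ne', key, Finset.mul_sum]
  refine Finset.sum_congr rfl fun k hk => ?_
  have hk' : k ≤ n := by simpa [Nat.lt_succ_iff] using hk
  have e2 : ((k.choose m : Polynomial ℝ) * ((n.choose k : Polynomial ℝ) *
      (hmA ^ k * (Polynomial.C (1 / 2) * (1 - Polynomial.X)) ^ (n - k)))) =
      ((k.choose m : ℝ) * ((n.choose k : ℝ) * (1 / 2) ^ n)) •
        ((1 + Polynomial.X) ^ k * (1 - Polynomial.X) ^ (n - k)) := by
    rw [Polynomial.smul_eq_C_mul, hmA, mul_pow, mul_pow]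
    have : (Polynomial.C (1 / 2 : ℝ)) ^ n = Polynomial.C (1 / 2 : ℝ) ^ k * Polynomial.C (1 / 2 : ℝ) ^ (n - k) := by
      rw [← pow_add]; congr 1; omega
    simp only [Polynomial.C_mul, Polynomial.C_pow, this, map_natCast]
    ring
  rw [e2, map_smul, smul_eq_mul, hmw, Nat.descFactorial_eq_factorial_mul_choose, Nat.descFactorial_eq_factorial_mul_choose]
  have : (m.factorial : ℝ) ≠ 0 := by exact_mod_cast m.factorial_ne_zero
  push_cast
  field_simp

open Filter Topology in
theorem hm_hausdorff (s : ℕ → ℝ)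
    (h : ∀ k l : ℕ, 0 ≤ ∑ i ∈ Finset.range (k + 1), ∑ j ∈ Finset.range (l + 1),
          (-1 : ℝ) ^ j * (k.choose i : ℝ) * (l.choose j : ℝ) * s (i + j)) :
    ∃ μ : Measure ℝ, IsFiniteMeasure μ ∧ μ (Set.Icc (-1 : ℝ) 1)ᶜ = 0 ∧
      ∀ k, ∫ x, x ^ k ∂μ = s k := by
  have hw : ∀ n k, 0 ≤ hmw s n k := fun n k => by
    rw [hmw, hmL_prod]; exact mul_nonneg (by positivity) (h _ _)
  let pt : ℕ → ℕ → unitInterval := fun n k => Set.projIcc 0 1 zero_le_one ((k : ℝ) / n)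
  let M : ℕ → Measure unitInterval := fun n =>
    ∑ k ∈ Finset.range (n + 1), (hmw s n k).toNNReal • Measure.dirac (pt n k)
  have hMfin : ∀ n, IsFiniteMeasure (M n) := fun n => by
    dsimp only [M]; infer_instance
  have hMint : ∀ n (f : unitInterval → ℝ), ∫ y, f y ∂(M n) =
      ∑ k ∈ Finset.range (n + 1), hmw s n k * f (pt n k) := by
    intro n f
    rw [integral_finsetSum_measure]
    · refine Finset.sum_congr rfl fun k _ => ?_
      rw [integral_smul_nnreal_measure, integral_dirac, NNReal.smul_def, Real.coe_toNNReal _ (hw n k), smul_eq_mul]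
    · intro k _
      exact Integrable.smul_measure_nnreal (integrable_dirac (by simp))
  have hptv : ∀ n k, k ≤ n → ((pt n k : unitInterval) : ℝ) = (k : ℝ) / n := by
    intro n k hk
    have : (k : ℝ) / n ∈ Set.Icc (0 : ℝ) 1 :=
      ⟨by positivity, div_le_one_of_le₀ (by exact_mod_cast hk) (by positivity)⟩
    simp only [pt]
    rw [Set.projIcc_of_mem _ this]
  have hsum : ∀ n, ∑ k ∈ Finset.range (n + 1), hmw s n k = s 0 := by
    intro n
    have := hmL_A_pow s 0 n (Nat.zero_le n)
    simp only [Nat.descFactorial_zero, Nat.cast_one, div_one, one_mul] at this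
    rw [← this, pow_zero, ← hmL_pow s 0, pow_zero]
  have hs0 : 0 ≤ s 0 := by rw [← hsum 0]; exact Finset.sum_nonneg fun k _ => hw _ _
  have hMlim : ∀ m, Tendsto (fun n => ∫ y : unitInterval, (y : ℝ) ^ m ∂(M n)) atTop (𝓝 (hmL s (hmA ^ m))) := by
    intro m
    rw [Metric.tendsto_atTop]
    intro ε hε
    obtain ⟨N, hN⟩ := hm_ratio_close m (ε / (s 0 + 1)) (by positivity)
    refine ⟨N + m, fun n hn => ?_⟩
    rw [hMint, hmL_A_pow s m n (by omega), Real.dist_eq, abs_sub_comm, ← Finset.sum_sub_distrib]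
    calc _ ≤ ∑ k ∈ Finset.range (n + 1), hmw s n k * (ε / (s 0 + 1)) := by
            refine (Finset.abs_sum_le_sum_abs _ _).trans (Finset.sum_le_sum fun k hk => ?_)
            have hk' : k ≤ n := by simpa [Nat.lt_succ_iff] using hk
            rw [hptv n k hk', mul_comm, ← mul_sub, abs_mul, abs_of_nonneg (hw n k)]
            exact mul_le_mul_of_nonneg_left (hN n (by omega) k hk') (hw n k)
      _ = s 0 * (ε / (s 0 + 1)) := by rw [← Finset.sum_mul, hsum]
      _ < ε := by
            rw [mul_div_assoc', div_lt_iff₀ (by positivity)]; nlinarith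
  let F : ℕ → FiniteMeasure unitInterval := fun n => ⟨M n, hMfin n⟩
  have hmass : ∀ n, (F n).mass ≤ (s 0).toNNReal := by
    intro n
    have h1 := hMint n (fun _ => 1)
    simp only [integral_const, mul_one, hsum, smul_eq_mul] at h1
    rw [← NNReal.coe_le_coe, Real.coe_toNNReal _ hs0, ← h1]
    exact le_of_eq rfl
  have hcomp := isCompact_setOfPred_finiteMeasure_le_of_compactSpace unitInterval (s 0).toNNReal
  obtain ⟨μ, -, hμ⟩ := hcomp.ultrafilter_le_nhds' ((hyperfilter ℕ).map F)
    (by rw [Ultrafilter.mem_map]; exact Filter.univ_mem' hmass)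
  have hF : Tendsto F (hyperfilter ℕ : Filter ℕ) (𝓝 μ) := hμ
  rw [FiniteMeasure.tendsto_iff_forall_integral_tendsto] at hF
  have hmom : ∀ m, ∫ y : unitInterval, (y : ℝ) ^ m ∂(μ : Measure unitInterval) = hmL s (hmA ^ m) := by
    intro m
    have t1 := hF (BoundedContinuousFunction.mkOfCompact ⟨fun y : unitInterval => (y : ℝ) ^ m, by fun_prop⟩)
    have t2 := (hMlim m).mono_left (Nat.hyperfilter_le_atTop)
    exact tendsto_nhds_unique t1 t2
  have hint : ∀ p : Polynomial ℝ, Integrable (fun y : unitInterval => p.eval (y : ℝ)) (μ : Measure unitInterval) := by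
    intro p
    have hc : Continuous (fun y : unitInterval => p.eval (y : ℝ)) := by fun_prop
    exact hc.integrable_of_hasCompactSupport (HasCompactSupport.of_compactSpace _)
  have hpoly : ∀ p : Polynomial ℝ, ∫ y : unitInterval, p.eval (y : ℝ) ∂(μ : Measure unitInterval) = hmL s (p.comp hmA) := by
    intro p
    induction p using Polynomial.induction_on' with
    | add p q hp hq =>
      simp only [Polynomial.eval_add, Polynomial.add_comp, map_add]
      rw [integral_add (hint p) (hint q), hp, hq]
    | monomial n a =>
      rw [Polynomial.monomial_comp, ← Polynomial.smul_eq_C_mul, map_smul, ← hmom, smul_eq_mul, ← integral_const_mul]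
      simp
  let g : unitInterval → ℝ := fun y => 2 * (y : ℝ) - 1
  have hg : Measurable g := by fun_prop
  refine ⟨(μ : Measure unitInterval).map g, inferInstance, ?_, fun k => ?_⟩
  · rw [Measure.map_apply hg measurableSet_Icc.compl]
    convert measure_empty (μ := (μ : Measure unitInterval))
    ext y
    have := y.2.1
    have := y.2.2
    simp only [Set.mem_preimage, Set.mem_compl_iff, Set.mem_Icc, g, Set.mem_empty_iff_false, iff_false, not_not]
    constructor <;> linarith
  · rw [integral_map hg.aemeasurable (by fun_prop)]
    have := hpoly ((Polynomial.C 2 * Polynomial.X - 1) ^ k)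
    have e : ((Polynomial.C 2 * Polynomial.X - 1 : Polynomial ℝ) ^ k).comp hmA = Polynomial.X ^ k := by
      rw [Polynomial.pow_comp]
      congr 1
      simp only [Polynomial.sub_comp, Polynomial.mul_comp, Polynomial.C_comp, Polynomial.X_comp, Polynomial.one_comp, hmA]
      rw [← mul_assoc, ← Polynomial.C_mul]
      norm_num
    rw [e, hmL_pow] at this
    rw [← this]
    simp [g]


theorem hm_integrable {μ : Measure ℝ} [IsFiniteMeasure μ] (hμ : μ (Set.Icc (-1 : ℝ) 1)ᶜ = 0)
    {f : ℝ → ℝ} (hf : Continuous f) : Integrable f μ := by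
  have : μ.restrict (Set.Icc (-1 : ℝ) 1) = μ :=
    Measure.restrict_eq_self_of_ae_mem (mem_ae_iff.2 hμ)
  rw [← this]
  exact hf.continuousOn.integrableOn_compact isCompact_Icc

def HmCar (s : SignedMeasure ℝ) : Prop := s.totalVariation (Set.Icc (-1 : ℝ) 1)ᶜ = 0

theorem HmCar.pos {s : SignedMeasure ℝ} (h : HmCar s) :
    s.toJordanDecomposition.posPart (Set.Icc (-1 : ℝ) 1)ᶜ = 0 := by
  unfold HmCar SignedMeasure.totalVariation at h
  rw [Measure.add_apply, add_eq_zero] at h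
  exact h.1

theorem HmCar.neg {s : SignedMeasure ℝ} (h : HmCar s) :
    s.toJordanDecomposition.negPart (Set.Icc (-1 : ℝ) 1)ᶜ = 0 := by
  unfold HmCar SignedMeasure.totalVariation at h
  rw [Measure.add_apply, add_eq_zero] at h
  exact h.2

theorem hm_decomp (s : SignedMeasure ℝ) :
    s = s.toJordanDecomposition.posPart.toSignedMeasure
      - s.toJordanDecomposition.negPart.toSignedMeasure :=
  (s.toSignedMeasure_toJordanDecomposition).symm

theorem hm_car_sub (μ ν : Measure ℝ) [IsFiniteMeasure μ] [IsFiniteMeasure ν]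
    (hμ : μ (Set.Icc (-1 : ℝ) 1)ᶜ = 0) (hν : ν (Set.Icc (-1 : ℝ) 1)ᶜ = 0) :
    HmCar (μ.toSignedMeasure - ν.toSignedMeasure) := by
  unfold HmCar SignedMeasure.totalVariation
  rw [Measure.toJordanDecomposition_toSignedMeasure_sub, Measure.add_apply, add_eq_zero]
  exact ⟨le_antisymm ((Measure.sub_le _).trans hμ.le) zero_le,
    le_antisymm ((Measure.sub_le _).trans hν.le) zero_le⟩

theorem hm_sInt_sub (μ ν : Measure ℝ) [IsFiniteMeasure μ] [IsFiniteMeasure ν]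
    (hμ : μ (Set.Icc (-1 : ℝ) 1)ᶜ = 0) (hν : ν (Set.Icc (-1 : ℝ) 1)ᶜ = 0)
    {f : ℝ → ℝ} (hf : Continuous f) :
    sInt (μ.toSignedMeasure - ν.toSignedMeasure) f = ∫ x, f x ∂μ - ∫ x, f x ∂ν := by
  have hc := hm_car_sub μ ν hμ hν
  have hd := hm_decomp (μ.toSignedMeasure - ν.toSignedMeasure)
  unfold sInt
  have hP := hc.pos
  have hN := hc.neg
  set P := (μ.toSignedMeasure - ν.toSignedMeasure).toJordanDecomposition.posPart
  set N := (μ.toSignedMeasure - ν.toSignedMeasure).toJordanDecomposition.negPart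
  have h1 : (μ + N).toSignedMeasure = (P + ν).toSignedMeasure := by
    rw [Measure.toSignedMeasure_add, Measure.toSignedMeasure_add]
    rw [sub_eq_sub_iff_add_eq_add] at hd
    exact hd
  rw [Measure.toSignedMeasure_eq_toSignedMeasure_iff] at h1
  have h2 : ∫ x, f x ∂(μ + N) = ∫ x, f x ∂(P + ν) := by rw [h1]
  rw [integral_add_measure (hm_integrable hμ hf) (hm_integrable hN hf),
    integral_add_measure (hm_integrable hP hf) (hm_integrable hν hf)] at h2
  linarith

theorem hm_add_aux (s r : SignedMeasure ℝ) : s + r =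
    (s.toJordanDecomposition.posPart + r.toJordanDecomposition.posPart).toSignedMeasure
    - (s.toJordanDecomposition.negPart + r.toJordanDecomposition.negPart).toSignedMeasure := by
  rw [Measure.toSignedMeasure_add, Measure.toSignedMeasure_add]
  conv_lhs => rw [hm_decomp s, hm_decomp r]
  abel

theorem HmCar.add {s r : SignedMeasure ℝ} (hs : HmCar s) (hr : HmCar r) : HmCar (s + r) := by
  rw [hm_add_aux]
  exact hm_car_sub _ _ (by simp [hs.pos, hr.pos]) (by simp [hs.neg, hr.neg])

theorem hm_sInt_add {s r : SignedMeasure ℝ} (hs : HmCar s) (hr : HmCar r)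
    {f : ℝ → ℝ} (hf : Continuous f) : sInt (s + r) f = sInt s f + sInt r f := by
  rw [hm_add_aux, hm_sInt_sub _ _ (by simp [hs.pos, hr.pos]) (by simp [hs.neg, hr.neg]) hf,
    integral_add_measure (hm_integrable hs.pos hf) (hm_integrable hr.pos hf),
    integral_add_measure (hm_integrable hs.neg hf) (hm_integrable hr.neg hf)]
  unfold sInt
  ring

theorem hm_neg (s : SignedMeasure ℝ) (f : ℝ → ℝ) : sInt (-s) f = - sInt s f := by
  unfold sInt
  rw [SignedMeasure.toJordanDecomposition_neg]
  simp

theorem hm_smul (s : SignedMeasure ℝ) (c : ℝ) (f : ℝ → ℝ) : sInt (c • s) f = c * sInt s f := by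
  unfold sInt
  rw [SignedMeasure.toJordanDecomposition_smul_real]
  rcases le_or_gt 0 c with h | h
  · rw [JordanDecomposition.real_smul_posPart_nonneg _ _ h,
      JordanDecomposition.real_smul_negPart_nonneg _ _ h, integral_smul_nnreal_measure,
      integral_smul_nnreal_measure, NNReal.smul_def, NNReal.smul_def, Real.coe_toNNReal _ h]
    simp only [smul_eq_mul]; ring
  · rw [JordanDecomposition.real_smul_posPart_neg _ _ h,
      JordanDecomposition.real_smul_negPart_neg _ _ h, integral_smul_nnreal_measure,
      integral_smul_nnreal_measure, NNReal.smul_def, NNReal.smul_def, Real.coe_toNNReal _ (by linarith)]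
    simp only [smul_eq_mul]; ring

theorem HmCar.smul {s : SignedMeasure ℝ} (hs : HmCar s) (c : ℝ) : HmCar (c • s) := by
  unfold HmCar SignedMeasure.totalVariation
  rw [SignedMeasure.toJordanDecomposition_smul_real]
  rcases le_or_gt 0 c with h | h
  · rw [JordanDecomposition.real_smul_posPart_nonneg _ _ h,
      JordanDecomposition.real_smul_negPart_nonneg _ _ h]
    simp [hs.pos, hs.neg]
  · rw [JordanDecomposition.real_smul_posPart_neg _ _ h,
      JordanDecomposition.real_smul_negPart_neg _ _ h]
    simp [hs.pos, hs.neg]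

theorem hm_car_zero : HmCar 0 := by
  unfold HmCar; rw [SignedMeasure.totalVariation_zero]; simp

theorem hm_sInt_zero (f : ℝ → ℝ) : sInt (0 : SignedMeasure ℝ) f = 0 := by
  unfold sInt; rw [SignedMeasure.toJordanDecomposition_zero]; simp

theorem hm_sum {ι : Type*} (F : Finset ι) (s : ι → SignedMeasure ℝ) (hs : ∀ i, HmCar (s i)) :
    HmCar (∑ i ∈ F, s i) ∧ ∀ f : ℝ → ℝ, Continuous f → sInt (∑ i ∈ F, s i) f = ∑ i ∈ F, sInt (s i) f := by
  classical
  induction F using Finset.induction_on with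
  | empty => exact ⟨by simpa using hm_car_zero, fun f _ => by simpa using hm_sInt_zero f⟩
  | insert a F ha ih =>
    rw [Finset.sum_insert ha]
    refine ⟨(hs a).add ih.1, fun f hf => ?_⟩
    rw [Finset.sum_insert ha, hm_sInt_add (hs a) ih.1 hf, ih.2 f hf]

/-- Determinacy of the moment problem on `[-1,1]`. -/
theorem hm_unique (μ ν : Measure ℝ) [IsFiniteMeasure μ] [IsFiniteMeasure ν]
    (hμ : μ (Set.Icc (-1 : ℝ) 1)ᶜ = 0) (hν : ν (Set.Icc (-1 : ℝ) 1)ᶜ = 0)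
    (h : ∀ k : ℕ, ∫ x, x ^ k ∂μ = ∫ x, x ^ k ∂ν) : μ = ν := by
  have hpoly : ∀ p : Polynomial ℝ, ∫ x, p.eval x ∂μ = ∫ x, p.eval x ∂ν := by
    intro p
    induction p using Polynomial.induction_on' with
    | add p q hp hq =>
      simp only [Polynomial.eval_add]
      rw [integral_add (hm_integrable hμ p.continuous) (hm_integrable hμ q.continuous),
        integral_add (hm_integrable hν p.continuous) (hm_integrable hν q.continuous), hp, hq]
    | monomial n a =>
      simp only [Polynomial.eval_monomial, integral_const_mul, h]
  have happ : ∀ (ρ : Measure ℝ) [IsFiniteMeasure ρ], ρ (Set.Icc (-1 : ℝ) 1)ᶜ = 0 →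
      ∀ (f g : ℝ → ℝ), Continuous f → Continuous g → ∀ ε, (∀ x ∈ Set.Icc (-1 : ℝ) 1, |f x - g x| < ε) →
      |∫ x, f x ∂ρ - ∫ x, g x ∂ρ| ≤ ε * ρ.real Set.univ := by
    intro ρ _ hρ f g hf hg ε hε
    rw [← integral_sub (hm_integrable hρ hf) (hm_integrable hρ hg)]
    refine norm_integral_le_of_norm_le_const (f := fun x => f x - g x) ?_
    have : ∀ᵐ x ∂ρ, x ∈ Set.Icc (-1 : ℝ) 1 := mem_ae_iff.2 hρ
    filter_upwards [this] with x hx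
    exact (hε x hx).le
  apply ext_of_forall_integral_eq_of_IsFiniteMeasure
  intro f
  apply eq_of_forall_dist_le
  intro ε hε
  obtain ⟨p, hp⟩ := exists_polynomial_near_of_continuousOn (-1) 1 f f.continuous.continuousOn
    (ε / (μ.real Set.univ + ν.real Set.univ + 1)) (by positivity)
  have h1 := happ μ hμ _ _ p.continuous f.continuous _ hp
  have h2 := happ ν hν _ _ p.continuous f.continuous _ hp
  rw [hpoly p] at h1
  rw [abs_sub_comm] at h1
  have h3 := dist_triangle (∫ x, f x ∂μ) (∫ x, p.eval x ∂ν) (∫ x, f x ∂ν)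
  rw [Real.dist_eq, Real.dist_eq (∫ x, f x ∂μ), Real.dist_eq (∫ x, p.eval x ∂ν)] at h3
  rw [Real.dist_eq]
  set D := μ.real Set.univ + ν.real Set.univ with hD
  have hD0 : 0 ≤ D := by positivity
  have h4 : ε / (D + 1) * D ≤ ε := by
    rw [div_mul_eq_mul_div, div_le_iff₀ (by positivity)]; nlinarith
  have h5 : ε / (D + 1) * D = ε / (D + 1) * μ.real Set.univ + ε / (D + 1) * ν.real Set.univ := by
    rw [hD]; ring
  linarith

theorem hm_unique_signed {s : SignedMeasure ℝ} (hs : HmCar s)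
    (h : ∀ k : ℕ, sInt s (fun x => x ^ k) = 0) : s = 0 := by
  have := hm_unique _ _ hs.pos hs.neg (fun k => by have := h k; unfold sInt at this; linarith)
  rw [hm_decomp s, sub_eq_zero]
  exact Measure.toSignedMeasure_congr this

theorem hm_pos_moment {s : SignedMeasure ℝ} (hs : HmCar s)
    (h : ∀ A, MeasurableSet A → 0 ≤ s A) (k l : ℕ) :
    0 ≤ ∑ i ∈ Finset.range (k + 1), ∑ j ∈ Finset.range (l + 1),
          (-1 : ℝ) ^ j * (k.choose i : ℝ) * (l.choose j : ℝ) * sInt s (fun x => x ^ (i + j)) := by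
  have hle : 0 ≤ s := fun A hA => by simpa using h A hA
  have hr : 0 ≤[Set.univ] s := (VectorMeasure.le_restrict_univ_iff_le _ _).2 hle
  set μ := s.toMeasureOfZeroLE Set.univ MeasurableSet.univ hr
  have e : μ.toSignedMeasure = s := SignedMeasure.toMeasureOfZeroLE_toSignedMeasure s hr
  have hμ : μ (Set.Icc (-1 : ℝ) 1)ᶜ = 0 := by
    have h0 : s (Set.Icc (-1 : ℝ) 1)ᶜ = 0 := SignedMeasure.null_of_totalVariation_zero s hs
    rw [← e, Measure.toSignedMeasure_apply_measurable measurableSet_Icc.compl] at h0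
    rwa [measureReal_eq_zero_iff] at h0
  have hint : ∀ f : ℝ → ℝ, Continuous f → sInt s f = ∫ x, f x ∂μ := by
    intro f hf
    have := hm_sInt_sub μ 0 hμ (by simp) hf
    rw [Measure.toSignedMeasure_zero, sub_zero, e] at this
    rw [this]; simp
  have : ∑ i ∈ Finset.range (k + 1), ∑ j ∈ Finset.range (l + 1),
          (-1 : ℝ) ^ j * (k.choose i : ℝ) * (l.choose j : ℝ) * sInt s (fun x => x ^ (i + j))
      = ∫ x, (1 + x) ^ k * (1 - x) ^ l ∂μ := by
    have e2 : ∀ x : ℝ, (1 + x) ^ k * (1 - x) ^ l = ∑ i ∈ Finset.range (k + 1), ∑ j ∈ Finset.range (l + 1),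
          (-1 : ℝ) ^ j * (k.choose i : ℝ) * (l.choose j : ℝ) * x ^ (i + j) := by
      intro x
      rw [add_comm 1, add_pow, sub_eq_neg_add, add_pow, Finset.sum_mul_sum]
      refine Finset.sum_congr rfl fun i _ => Finset.sum_congr rfl fun j _ => ?_
      rw [neg_pow]
      simp
      ring
    simp_rw [e2]
    rw [integral_finsetSum _ fun i _ => hm_integrable hμ (by fun_prop)]
    refine Finset.sum_congr rfl fun i _ => ?_
    rw [integral_finsetSum _ fun i _ => hm_integrable hμ (by fun_prop)]
    refine Finset.sum_congr rfl fun j _ => ?_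
    rw [integral_const_mul, hint _ (by fun_prop)]
  rw [this]
  apply integral_nonneg_of_ae
  have : ∀ᵐ x ∂μ, x ∈ Set.Icc (-1 : ℝ) 1 := mem_ae_iff.2 hμ
  filter_upwards [this] with x hx
  exact mul_nonneg (pow_nonneg (by linarith [hx.1]) _) (pow_nonneg (by linarith [hx.2]) _)

theorem hm_trace_nonneg {t : ℕ} {G E : Matrix (Fin t) (Fin t) ℝ} (hG : G.PosSemidef)
    (hE : E.PosSemidef) : 0 ≤ (G * E).trace := by
  obtain ⟨B, rfl⟩ : ∃ B : Matrix (Fin t) (Fin t) ℝ, G = B.conjTranspose * B := by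
    open scoped MatrixOrder in
    exact CStarAlgebra.nonneg_iff_eq_star_mul_self.mp hG.nonneg
  rw [Matrix.mul_assoc, Matrix.trace_mul_comm, Matrix.mul_assoc, ← Matrix.mul_assoc]
  exact (hE.mul_mul_conjTranspose_same B).trace_nonneg


theorem hm_posSemidef_limit {t : ℕ} (S : ℕ → Matrix (Fin t) (Fin t) ℝ)
    (h : ∀ G : Matrix (Fin t) (Fin t) ℝ, G.PosDef → ∀ k l : ℕ,
        0 ≤ ∑ i ∈ Finset.range (k + 1), ∑ j ∈ Finset.range (l + 1),
          (-1 : ℝ) ^ j * (k.choose i : ℝ) * (l.choose j : ℝ) * (G * S (i + j)).trace)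
    (G : Matrix (Fin t) (Fin t) ℝ) (hG : G.PosSemidef) (k l : ℕ) :
    0 ≤ ∑ i ∈ Finset.range (k + 1), ∑ j ∈ Finset.range (l + 1),
          (-1 : ℝ) ^ j * (k.choose i : ℝ) * (l.choose j : ℝ) * (G * S (i + j)).trace := by
  let φ : Matrix (Fin t) (Fin t) ℝ → ℝ := fun G =>
    ∑ i ∈ Finset.range (k + 1), ∑ j ∈ Finset.range (l + 1),
          (-1 : ℝ) ^ j * (k.choose i : ℝ) * (l.choose j : ℝ) * (G * S (i + j)).trace
  have hφ : Continuous fun ε : ℝ => φ (G + ε • (1 : Matrix (Fin t) (Fin t) ℝ)) := by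
    simp only [φ, add_mul, Matrix.smul_mul, Matrix.trace_add, Matrix.trace_smul, smul_eq_mul]
    fun_prop
  have h0 : φ G = φ (G + (0 : ℝ) • (1 : Matrix (Fin t) (Fin t) ℝ)) := by simp
  change 0 ≤ φ G
  rw [h0]
  have ht : Filter.Tendsto (fun ε : ℝ => φ (G + ε • (1 : Matrix (Fin t) (Fin t) ℝ)))
      (nhdsWithin 0 (Set.Ioi 0)) (nhds (φ (G + (0 : ℝ) • (1 : Matrix (Fin t) (Fin t) ℝ)))) :=
    (hφ.tendsto 0).mono_left nhdsWithin_le_nhds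
  refine ge_of_tendsto ht ?_
  filter_upwards [self_mem_nhdsWithin] with ε hε
  exact h _ (Matrix.PosDef.posSemidef_add hG (Matrix.PosDef.one.smul hε)) k l

theorem hm_polar {t : ℕ} (M : Matrix (Fin t) (Fin t) ℝ) (hM : M.IsSymm) (i j : Fin t) :
    (1 / 2 : ℝ) * (((Pi.single i 1 + Pi.single j 1) ⬝ᵥ M.mulVec (Pi.single i 1 + Pi.single j 1)
      - (Pi.single i 1) ⬝ᵥ M.mulVec (Pi.single i 1)) - (Pi.single j 1) ⬝ᵥ M.mulVec (Pi.single j 1)) = M i j := by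
  have := hM.apply i j
  simp [Matrix.mulVec_add, add_dotProduct, dotProduct_add]
  linarith

/-- a sequence `S` of symmetric matrices is a matrix-valued `[-1,1]`-moment
sequence iff `Σᵢ Σⱼ (-1)^j C(k,i) C(l,j) tr(G S_{i+j}) ≥ 0` for all positive definite `G`
and all `k, l ∈ ℕ`. -/
theorem matMomentSeq_Icc_neg_one_one_iff (t : ℕ)
    (S : ℕ → Matrix (Fin t) (Fin t) ℝ) (hS : ∀ i, (S i).IsSymm) :
    IsMatMomentSeq S (Set.Icc (-1 : ℝ) 1) ↔
      ∀ G : Matrix (Fin t) (Fin t) ℝ, G.PosDef → ∀ k l : ℕ,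
        0 ≤ ∑ i ∈ Finset.range (k + 1), ∑ j ∈ Finset.range (l + 1),
          (-1 : ℝ) ^ j * (k.choose i : ℝ) * (l.choose j : ℝ) * (G * S (i + j)).trace := by
  constructor
  · rintro ⟨E, hpsd, hsupp, hmom⟩ G hG k l
    have hc : ∀ a b, HmCar (E a b) := hsupp
    have h1 : ∀ a, _ := fun a => hm_sum Finset.univ (fun b => G a b • E b a) (fun b => (hc b a).smul _)
    have h2 := hm_sum Finset.univ (fun a => ∑ b, G a b • E b a) (fun a => (h1 a).1)
    have hval : ∀ n, (G * S n).trace = sInt (∑ a, ∑ b, G a b • E b a) (fun x => x ^ n) := by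
      intro n
      rw [h2.2 _ (by fun_prop), Matrix.trace]
      refine Finset.sum_congr rfl fun a _ => ?_
      rw [(h1 a).2 _ (by fun_prop), Matrix.diag_apply, Matrix.mul_apply]
      refine Finset.sum_congr rfl fun b _ => ?_
      rw [hm_smul, hmom]
    simp_rw [hval]
    refine hm_pos_moment h2.1 (fun A hA => ?_) k l
    have := hm_trace_nonneg hG.posSemidef (hpsd A hA)
    simpa [Matrix.trace, Matrix.mul_apply, FunLike.coe_smul] using this
  · intro h
    have hH : ∀ v : Fin t → ℝ, ∃ μ : Measure ℝ, IsFiniteMeasure μ ∧ μ (Set.Icc (-1 : ℝ) 1)ᶜ = 0 ∧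
        ∀ k, ∫ x, x ^ k ∂μ = v ⬝ᵥ (S k).mulVec v := by
      intro v
      apply hm_hausdorff
      intro k l
      have := hm_posSemidef_limit S h _ (Matrix.posSemidef_vecMulVec_self_star v) k l
      have e : ∀ n, (Matrix.vecMulVec v (star v) * S n).trace = v ⬝ᵥ (S n).mulVec v := by
        intro n
        rw [Matrix.trace_mul_comm, Matrix.mul_vecMulVec, Matrix.trace_vecMulVec, star_trivial, dotProduct_comm]
      simpa only [e] using this
    choose μ hfin hnull hmom using hH
    let s : (Fin t → ℝ) → SignedMeasure ℝ := fun v => (μ v).toSignedMeasure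
    have hsub0 : ∀ v, s v = (μ v).toSignedMeasure - (0 : Measure ℝ).toSignedMeasure := by
      intro v; rw [Measure.toSignedMeasure_zero, sub_zero]
    have hsc : ∀ v, HmCar (s v) := fun v => by
      rw [hsub0]; exact hm_car_sub _ _ (hnull v) (by simp)
    have hsm : ∀ v k, sInt (s v) (fun x => x ^ k) = v ⬝ᵥ (S k).mulVec v := fun v k => by
      rw [hsub0, hm_sInt_sub _ _ (hnull v) (by simp) (by fun_prop), hmom]; simp
    let e : Fin t → Fin t → ℝ := fun i => Pi.single i 1
    let E : Fin t → Fin t → SignedMeasure ℝ := fun i j =>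
      (1 / 2 : ℝ) • (s (e i + e j) + (-1 : ℝ) • s (e i) + (-1 : ℝ) • s (e j))
    have hEc : ∀ i j, HmCar (E i j) := fun i j =>
      (((hsc _).add ((hsc _).smul _)).add ((hsc _).smul _)).smul _
    have hEm : ∀ k i j, sInt (E i j) (fun x => x ^ k) = S k i j := by
      intro k i j
      rw [hm_smul, hm_sInt_add ((hsc _).add ((hsc _).smul _)) ((hsc _).smul _) (by fun_prop),
        hm_sInt_add (hsc _) ((hsc _).smul _) (by fun_prop), hm_smul, hm_smul, hsm, hsm, hsm,
        ← hm_polar (S k) (hS k) i j]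
      ring
    have hEsymm : ∀ i j, E i j = E j i := by
      intro i j
      simp only [E]
      rw [add_comm (e i), add_right_comm]
    refine ⟨E, fun A hA => ?_, hEc, fun k i j => (hEm k i j).symm⟩
    refine Matrix.PosSemidef.of_dotProduct_mulVec_nonneg ?_ fun v => ?_
    · ext i j
      simp [hEsymm i j]
    · have h1 : ∀ a, _ := fun a => hm_sum Finset.univ (fun b => (v a * v b) • E a b) (fun b => (hEc a b).smul _)
      have h2 := hm_sum Finset.univ (fun a => ∑ b, (v a * v b) • E a b) (fun a => (h1 a).1)
      have hz : (∑ a, ∑ b, (v a * v b) • E a b) + (-1 : ℝ) • s v = 0 := by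
        refine hm_unique_signed (h2.1.add ((hsc v).smul _)) fun k => ?_
        rw [hm_sInt_add h2.1 ((hsc v).smul _) (by fun_prop), hm_smul, hsm, h2.2 _ (by fun_prop)]
        have : ∀ a, sInt (∑ b, (v a * v b) • E a b) (fun x => x ^ k) = v a * (S k).mulVec v a := by
          intro a
          rw [(h1 a).2 _ (by fun_prop), Matrix.mulVec, dotProduct, Finset.mul_sum]
          refine Finset.sum_congr rfl fun b _ => ?_
          rw [hm_smul, hEm]; ring
        simp only [this, dotProduct]
        ring
      have hz2 : (∑ a, ∑ b, (v a * v b) • E a b) = s v := by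
        have hneg : (-1 : ℝ) • s v = - s v := by
          ext B hB
          simp
        rw [hneg, ← sub_eq_add_neg, sub_eq_zero] at hz
        exact hz
      have hz3 : star v ⬝ᵥ (Matrix.of fun i j => E i j A).mulVec v = s v A := by
        rw [← hz2]
        simp only [dotProduct, Matrix.mulVec, Matrix.of_apply, star_trivial, Finset.mul_sum]
        simp only [FunLike.coe_smul, FunLike.coe_sum, Finset.sum_apply, Pi.smul_apply, smul_eq_mul]
        refine Finset.sum_congr rfl fun a _ => Finset.sum_congr rfl fun b _ => ?_
        ring
      rw [hz3]
      simp only [s]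
      rw [Measure.toSignedMeasure_apply_measurable hA]
      exact measureReal_nonneg
end

section
/- Let S = (S_i)_{i ∈ ℕ₀} be a sequence of symmetric matrices in M_t(ℝ). Then S is a matrix-valued [0,1]-moment sequence if and only if Σ_{i=0}^{k} (-1)^i C(k,i) tr(G S_{i+l}) ≥ 0 for all positive definite matrices G ∈ M_t(ℝ) and all k, l ∈ ℕ₀, where C(k,i) denotes the binomial coefficient. -/
open MeasureTheory

noncomputable def posComb {α ι : Type*} [MeasurableSpace α] [Fintype ι] (c : ι → ℝ)
    (m : ι → Measure α) : Measure α := ∑ a, (c a).toNNReal • m a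

instance {α ι : Type*} [MeasurableSpace α] [Fintype ι] (c : ι → ℝ)
    (m : ι → Measure α) [∀ a, IsFiniteMeasure (m a)] : IsFiniteMeasure (posComb c m) := by
  unfold posComb; infer_instance

lemma integrable_posComb {α ι : Type*} [MeasurableSpace α] [Fintype ι] (c : ι → ℝ)
    (m : ι → Measure α) (f : α → ℝ) (hf : ∀ a, Integrable f (m a)) :
    Integrable f (posComb c m) := by
  unfold posComb
  rw [integrable_finsetSum_measure]
  intro a _
  exact (hf a).smul_measure_nnreal

lemma integral_posComb {α ι : Type*} [MeasurableSpace α] [Fintype ι] (c : ι → ℝ)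
    (m : ι → Measure α) (f : α → ℝ) (hf : ∀ a, Integrable f (m a)) :
    ∫ x, f x ∂(posComb c m) - ∫ x, f x ∂(posComb (-c) m) = ∑ a, c a * ∫ x, f x ∂(m a) := by
  unfold posComb
  rw [integral_finsetSum_measure (fun a _ => (hf a).smul_measure_nnreal),
    integral_finsetSum_measure (fun a _ => (hf a).smul_measure_nnreal), ← Finset.sum_sub_distrib]
  refine Finset.sum_congr rfl fun a _ => ?_
  rw [integral_smul_nnreal_measure, integral_smul_nnreal_measure]
  simp only [NNReal.smul_def, Real.coe_toNNReal', smul_eq_mul, ← sub_mul, Pi.neg_apply]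
  congr 1
  exact max_zero_sub_eq_self (c a)

lemma real_posComb {α ι : Type*} [MeasurableSpace α] [Fintype ι] (c : ι → ℝ)
    (m : ι → Measure α) [∀ a, IsFiniteMeasure (m a)] (A : Set α) (hA : MeasurableSet A) :
    (posComb c m).real A - (posComb (-c) m).real A = ∑ a, c a * (m a).real A := by
  have := integral_posComb c m (A.indicator 1) (fun a => (integrable_const (1:ℝ)).indicator hA)
  simpa [integral_indicator_one hA] using this

lemma comb_nonneg {α ι : Type*} [MeasurableSpace α] [Fintype ι] (c : ι → ℝ)
    (m : ι → Measure α) [∀ a, IsFiniteMeasure (m a)]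
    (h : ∀ A, MeasurableSet A → 0 ≤ ∑ a, c a * (m a).real A) (f : α → ℝ)
    (hf : ∀ a, Integrable f (m a)) (h0 : ∀ a, 0 ≤ᵐ[m a] f) :
    0 ≤ ∑ a, c a * ∫ x, f x ∂(m a) := by
  rw [← integral_posComb c m f hf, sub_nonneg]
  refine integral_mono_measure ?_ ?_ (integrable_posComb c m f hf)
  · refine Measure.le_iff.2 fun A hA => ?_
    have := h A hA
    rw [← real_posComb c m A hA, sub_nonneg] at this
    exact (ENNReal.toReal_le_toReal (measure_ne_top _ _) (measure_ne_top _ _)).1 this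
  · unfold posComb
    rw [Filter.EventuallyLE, ae_iff, Measure.finsetSum_apply]
    refine Finset.sum_eq_zero fun a _ => ?_
    have := ae_iff.1 (h0 a)
    simp only [Measure.smul_apply, this, smul_zero]

lemma comb_zero {α ι : Type*} [MeasurableSpace α] [Fintype ι] (c : ι → ℝ)
    (m : ι → Measure α) [∀ a, IsFiniteMeasure (m a)]
    (h : ∀ A, MeasurableSet A → ∑ a, c a * (m a).real A = 0) (f : α → ℝ)
    (hf : ∀ a, Integrable f (m a)) :
    ∑ a, c a * ∫ x, f x ∂(m a) = 0 := by
  rw [← integral_posComb c m f hf, sub_eq_zero]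
  congr 1
  refine Measure.ext fun A hA => ?_
  have := h A hA
  rw [← real_posComb c m A hA, sub_eq_zero] at this
  exact (ENNReal.toReal_eq_toReal_iff' (measure_ne_top _ _) (measure_ne_top _ _)).1 this

open unitInterval in
lemma ext_moments (μ ν : Measure I) [IsFiniteMeasure μ] [IsFiniteMeasure ν]
    (h : ∀ n : ℕ, ∫ x, (x : ℝ) ^ n ∂μ = ∫ x, (x : ℝ) ^ n ∂ν) : μ = ν := by
  refine ext_of_forall_integral_eq_of_IsFiniteMeasure fun f => ?_
  have hint : ∀ (ρ : Measure I) [IsFiniteMeasure ρ] (g : C(I, ℝ)), Integrable g ρ := fun ρ _ g =>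
    g.continuous.integrable_of_hasCompactSupport (HasCompactSupport.of_compactSpace g)
  have hp : ∀ p : Polynomial ℝ, ∫ x : I, p.eval (x : ℝ) ∂μ = ∫ x : I, p.eval (x : ℝ) ∂ν := by
    intro p
    simp only [Polynomial.eval_eq_sum_range]
    rw [integral_finsetSum, integral_finsetSum]
    · simp only [integral_const_mul, h]
    · intro i _; exact hint _ ⟨fun x : I => p.coeff i * (x : ℝ) ^ i, by fun_prop⟩
    · intro i _; exact hint _ ⟨fun x : I => p.coeff i * (x : ℝ) ^ i, by fun_prop⟩
  have key : ∀ ε > 0, |∫ x, f x ∂μ - ∫ x, f x ∂ν| ≤ ε * (μ.real Set.univ + ν.real Set.univ) := by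
    intro ε hε
    obtain ⟨p, hpe⟩ := exists_polynomial_near_continuousMap 0 1 f.toContinuousMap ε hε
    have hb : ∀ (ρ : Measure I) [IsFiniteMeasure ρ],
        |∫ x, f x ∂ρ - ∫ x : I, p.eval (x : ℝ) ∂ρ| ≤ ε * ρ.real Set.univ := by
      intro ρ _
      have e : ∫ x : I, (f x - p.eval (x : ℝ)) ∂ρ = ∫ x, f x ∂ρ - ∫ x : I, p.eval (x : ℝ) ∂ρ :=
        integral_sub (hint ρ f.toContinuousMap) (hint ρ (p.toContinuousMapOn I))
      rw [← e, ← Real.norm_eq_abs]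
      refine norm_integral_le_of_norm_le_const (μ := ρ) (Filter.Eventually.of_forall fun x => ?_)
      have := (ContinuousMap.norm_coe_le_norm (p.toContinuousMapOn _ - f.toContinuousMap) x).trans hpe.le
      rw [norm_sub_rev]
      exact this
    have h1 := abs_le.1 (hb μ)
    have h2 := abs_le.1 (hb ν)
    have h3 := hp p
    rw [abs_le]; constructor <;> linarith [h1.1, h1.2, h2.1, h2.2]
  by_contra hne
  have hpos : 0 < |∫ x, f x ∂μ - ∫ x, f x ∂ν| := abs_pos.2 (sub_ne_zero.2 hne)
  have hM : 0 ≤ μ.real Set.univ + ν.real Set.univ := by positivity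
  have := key (|∫ x, f x ∂μ - ∫ x, f x ∂ν| / (2 * (μ.real Set.univ + ν.real Set.univ + 1))) (by positivity)
  rw [div_mul_eq_mul_div, le_div_iff₀ (by positivity)] at this
  nlinarith

open unitInterval in
lemma comb_moments {ι : Type*} [Fintype ι] (c : ι → ℝ)
    (m : ι → Measure I) [∀ a, IsFiniteMeasure (m a)]
    (h : ∀ n : ℕ, ∑ a, c a * ∫ x, (x : ℝ) ^ n ∂(m a) = 0)
    (A : Set I) (hA : MeasurableSet A) :
    ∑ a, c a * (m a).real A = 0 := by
  rw [← real_posComb c m A hA, sub_eq_zero]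
  congr 1
  refine ext_moments _ _ fun n => ?_
  rw [← sub_eq_zero, integral_posComb, h]
  intro a
  exact Continuous.integrable_of_hasCompactSupport (by fun_prop) (HasCompactSupport.of_compactSpace _)

/-- estimate -/
lemma choose_ratio (n k : ℕ) (hk : k ≤ n) (m : ℕ) (hm : m < n) :
    |(k.choose m : ℝ) / (n.choose m : ℝ) - ((k : ℝ) / n) ^ m| ≤ (m : ℝ) ^ 2 / (n - m) := by
  induction m with
  | zero => simp
  | succ m ih =>
    have ih := ih (by omega)
    have hmn : ((m : ℝ) + 1) < n := by exact_mod_cast hm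
    have hkn : (k : ℝ) ≤ n := by exact_mod_cast hk
    have hn0 : (0 : ℝ) < n := by linarith [(m.cast_nonneg : (0:ℝ) ≤ m)]
    have hm0 : (0 : ℝ) ≤ m := m.cast_nonneg
    have hk0 : (0 : ℝ) ≤ k := k.cast_nonneg
    have hch : ∀ j : ℕ, (j.choose (m+1) : ℝ) = j.choose m * (j - m) / (m + 1) := by
      intro j
      rw [eq_div_iff (by positivity)]
      rcases le_or_gt m j with hj | hj
      · have := Nat.choose_succ_right_eq j m
        rw [← Nat.cast_sub hj]
        exact_mod_cast this
      · simp [Nat.choose_eq_zero_of_lt hj, Nat.choose_eq_zero_of_lt (Nat.lt_succ_of_lt hj)]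
    have hcn : (0:ℝ) < n.choose m := by exact_mod_cast Nat.choose_pos (by omega)
    have hck : (k.choose m : ℝ) ≤ n.choose m := by exact_mod_cast Nat.choose_le_choose m hk
    set r : ℝ := (k.choose m : ℝ) / n.choose m with hr
    have hr0 : 0 ≤ r := by positivity
    have hr1 : r ≤ 1 := by rw [hr, div_le_one hcn]; exact hck
    set x : ℝ := (k : ℝ) / n with hx
    have hx0 : 0 ≤ x := by positivity
    have hx1 : x ≤ 1 := by rw [hx, div_le_one hn0]; exact hkn
    have hnm : (0:ℝ) < n - m := by linarith
    have e1 : (k.choose (m+1) : ℝ) / (n.choose (m+1) : ℝ) = r * ((k - m) / (n - m)) := by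
      rw [hch, hch, hr]; field_simp
    have e2 : ((k : ℝ) - m) / (n - m) - x = - (m * (1 - x) / (n - m)) := by
      rw [hx]; field_simp; ring
    have e3 : |((k : ℝ) - m) / (n - m) - x| ≤ m / (n - m) := by
      rw [e2, abs_neg, abs_of_nonneg (by have : 0 ≤ 1 - x := by linarith
                                         positivity)]
      gcongr
      nlinarith
    have e4 : r * ((k - m) / (n - m)) - x ^ (m+1) =
      r * ((k - m) / (n - m) - x) + x * (r - x ^ m) := by ring
    rw [e1, e4]
    calc _ ≤ |r * (((k:ℝ) - m) / (n - m) - x)| + |x * (r - x ^ m)| := abs_add_le _ _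
      _ ≤ m / (n - m) + m ^ 2 / (n - m) := by
        rw [abs_mul, abs_mul, abs_of_nonneg hr0, abs_of_nonneg hx0]
        exact add_le_add ((mul_le_of_le_one_left (abs_nonneg _) hr1).trans e3)
          ((mul_le_of_le_one_left (abs_nonneg _) hx1).trans ih)
      _ = (m + m ^ 2) / (n - m) := by ring
      _ ≤ ((m + 1 : ℕ) : ℝ) ^ 2 / (n - (m + 1 : ℕ)) := by
        push_cast
        apply div_le_div₀ <;> nlinarith

lemma bern_sum (n m : ℕ) (hm : m ≤ n) :
    ∑ k ∈ Finset.range (n + 1), (k.choose m : ℝ) • bernsteinPolynomial ℝ n k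
      = (n.choose m : ℝ) • (Polynomial.X ^ m : Polynomial ℝ) := by
  obtain ⟨d, rfl⟩ := Nat.exists_eq_add_of_le hm
  rw [add_assoc, Finset.sum_range_add, Finset.sum_eq_zero, zero_add]
  · have hb : ∑ k ∈ Finset.range (d + 1), bernsteinPolynomial ℝ d k = 1 := bernsteinPolynomial.sum ℝ d
    rw [← mul_one (Polynomial.X ^ m), ← hb, Finset.mul_sum, Finset.smul_sum]
    refine Finset.sum_congr rfl fun k hk => ?_
    have hk : k ≤ d := by simpa [Nat.lt_succ_iff] using hk
    have hc := Nat.choose_mul (n := m + d) (k := m + k) (s := m) (by omega)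
    have hc' : ((m+d).choose (m+k) : Polynomial ℝ) * ((m+k).choose m : Polynomial ℝ)
      = ((m+d).choose m : Polynomial ℝ) * (d.choose k : Polynomial ℝ) := by
      rw [Nat.add_sub_cancel_left, Nat.add_sub_cancel_left] at hc
      exact_mod_cast hc
    simp only [bernsteinPolynomial, Polynomial.smul_eq_C_mul, map_natCast]
    rw [Nat.add_sub_add_left]
    linear_combination (Polynomial.X ^ (m + k) * (1 - Polynomial.X) ^ (d - k)) * hc'
  · intro k hk
    rw [Finset.mem_range] at hk
    simp [Nat.choose_eq_zero_of_lt hk]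

noncomputable def momL (s : ℕ → ℝ) : Polynomial ℝ →ₗ[ℝ] ℝ :=
  Polynomial.lsum fun n => LinearMap.toSpanSingleton ℝ ℝ (s n)

lemma momL_X (s : ℕ → ℝ) (n : ℕ) : momL s (Polynomial.X ^ n) = s n := by
  simp [momL, ← Polynomial.monomial_one_right_eq_X_pow, Polynomial.sum_monomial_index]

lemma momL_bern (s : ℕ → ℝ)
    (h : ∀ k l : ℕ, 0 ≤ ∑ i ∈ Finset.range (k + 1), (-1 : ℝ) ^ i * (k.choose i : ℝ) * s (i + l))
    (n k : ℕ) : 0 ≤ momL s (bernsteinPolynomial ℝ n k) := by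
  have e : bernsteinPolynomial ℝ n k = (n.choose k : ℝ) •
      ∑ i ∈ Finset.range (n - k + 1), ((-1 : ℝ) ^ i * ((n - k).choose i : ℝ)) •
        (Polynomial.X ^ (i + k) : Polynomial ℝ) := by
    rw [bernsteinPolynomial, sub_eq_neg_add, add_pow, Polynomial.smul_eq_C_mul, mul_assoc,
      map_natCast, Finset.mul_sum]
    congr 1
    refine Finset.sum_congr rfl fun i _ => ?_
    rw [Polynomial.smul_eq_C_mul, map_mul, map_pow, map_neg, map_one, map_natCast,
      neg_pow (Polynomial.X : Polynomial ℝ)]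
    ring
  rw [e, map_smul, map_sum]
  simp only [map_smul, momL_X, smul_eq_mul]
  exact mul_nonneg (Nat.cast_nonneg _) (h _ _)

open unitInterval in
noncomputable def discM (s : ℕ → ℝ) (n : ℕ) : Measure I :=
  ∑ k ∈ Finset.range (n + 1), (momL s (bernsteinPolynomial ℝ n k)).toNNReal •
    Measure.dirac (Set.projIcc (0 : ℝ) 1 zero_le_one ((k : ℝ) / n))

instance (s : ℕ → ℝ) (n : ℕ) : IsFiniteMeasure (discM s n) := by
  unfold discM; infer_instance

open unitInterval in
lemma integral_discM (s : ℕ → ℝ)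
    (h : ∀ k l : ℕ, 0 ≤ ∑ i ∈ Finset.range (k + 1), (-1 : ℝ) ^ i * (k.choose i : ℝ) * s (i + l))
    (n m : ℕ) : ∫ x : I, (x : ℝ) ^ m ∂(discM s n) =
      ∑ k ∈ Finset.range (n + 1), momL s (bernsteinPolynomial ℝ n k) * ((k : ℝ) / n) ^ m := by
  unfold discM
  rw [integral_finsetSum_measure]
  · refine Finset.sum_congr rfl fun k hk => ?_
    have hk : k ≤ n := by simpa [Nat.lt_succ_iff] using hk
    rw [integral_smul_nnreal_measure, integral_dirac, NNReal.smul_def,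
      Real.coe_toNNReal _ (momL_bern s h n k), smul_eq_mul,
      Set.projIcc_of_mem zero_le_one (x := (k : ℝ) / n)
        ⟨by positivity, div_le_one_of_le₀ (by exact_mod_cast hk) (by positivity)⟩]
  · intro k _
    refine Integrable.smul_measure_nnreal ?_
    exact Continuous.integrable_of_hasCompactSupport (by fun_prop)
      (HasCompactSupport.of_compactSpace _)

lemma momL_sum (s : ℕ → ℝ) (n m : ℕ) (hm : m ≤ n) :
    ∑ k ∈ Finset.range (n + 1), momL s (bernsteinPolynomial ℝ n k) *
      ((k.choose m : ℝ) / (n.choose m : ℝ)) = s m := by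
  have hcn : (n.choose m : ℝ) ≠ 0 := by exact_mod_cast (Nat.choose_pos hm).ne'
  have := congrArg (momL s) (bern_sum n m hm)
  rw [map_sum] at this
  simp only [map_smul, momL_X, smul_eq_mul] at this
  simp only [mul_div_assoc', ← Finset.sum_div]
  rw [div_eq_iff hcn, mul_comm (s m), ← this]
  exact Finset.sum_congr rfl fun k _ => mul_comm _ _

open unitInterval in
lemma discM_bound (s : ℕ → ℝ)
    (h : ∀ k l : ℕ, 0 ≤ ∑ i ∈ Finset.range (k + 1), (-1 : ℝ) ^ i * (k.choose i : ℝ) * s (i + l))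
    (n m : ℕ) (hm : m < n) :
    ‖∫ x : I, (x : ℝ) ^ m ∂(discM s n) - s m‖ ≤ s 0 * ((m : ℝ) ^ 2 / (n - m)) := by
  rw [integral_discM s h]
  nth_rw 1 [← momL_sum s n m hm.le]
  rw [← momL_sum s n 0 (Nat.zero_le _), ← Finset.sum_sub_distrib, Finset.sum_mul]
  refine (norm_sum_le _ _).trans (Finset.sum_le_sum fun k hk => ?_)
  have hk : k ≤ n := by simpa [Nat.lt_succ_iff] using hk
  rw [← mul_sub, norm_mul, Real.norm_of_nonneg (momL_bern s h n k), norm_sub_rev]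
  simp only [Nat.choose_zero_right, Nat.cast_one, div_one, mul_one]
  exact mul_le_mul_of_nonneg_left (choose_ratio n k hk m hm) (momL_bern s h n k)

open unitInterval Filter Topology in
lemma hausdorff (s : ℕ → ℝ)
    (h : ∀ k l : ℕ, 0 ≤ ∑ i ∈ Finset.range (k + 1), (-1 : ℝ) ^ i * (k.choose i : ℝ) * s (i + l)) :
    ∃ μ : Measure I, IsFiniteMeasure μ ∧ ∀ m : ℕ, ∫ x : I, (x : ℝ) ^ m ∂μ = s m := by
  let μ : ℕ → FiniteMeasure I := fun n => ⟨discM s n, inferInstance⟩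
  have hmass : ∀ n, (μ n).mass ≤ (s 0).toNNReal := by
    intro n
    have h0 := integral_discM s h n 0
    have h1 := momL_sum s n 0 (Nat.zero_le _)
    simp only [Nat.choose_zero_right, Nat.cast_one, div_one, mul_one] at h1
    simp only [pow_zero, mul_one, h1, integral_const, smul_eq_mul] at h0
    apply le_of_eq
    rw [← h0]
    ext
    rw [Real.coe_toNNReal _ (by positivity)]
    rfl
  let U : Ultrafilter ℕ := Ultrafilter.of atTop
  have hU : (U : Filter ℕ) ≤ atTop := Ultrafilter.of_le _
  obtain ⟨ν, -, hν⟩ := (isCompact_setOfPred_finiteMeasure_le_of_compactSpace I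
    (s 0).toNNReal).ultrafilter_le_nhds' (U.map μ)
      (Filter.mem_map.2 (Filter.univ_mem' hmass))
  refine ⟨ν, inferInstance, fun m => ?_⟩
  have t1 := (FiniteMeasure.tendsto_iff_forall_integral_tendsto.1
    (show Tendsto μ U (𝓝 ν) from hν)) (BoundedContinuousFunction.mkOfCompact
      ⟨fun x : I => (x : ℝ) ^ m, by fun_prop⟩)
  have t2 : Tendsto (fun n => ∫ x : I, (x : ℝ) ^ m ∂(discM s n)) atTop (𝓝 (s m)) := by
    rw [tendsto_iff_norm_sub_tendsto_zero]
    refine squeeze_zero' (Eventually.of_forall fun _ => norm_nonneg _)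
      ((eventually_gt_atTop m).mono fun n hn => discM_bound s h n m hn) ?_
    rw [← mul_zero (s 0)]
    refine Tendsto.const_mul _ (Tendsto.const_div_atTop ?_ _)
    exact tendsto_atTop_add_const_right _ _ tendsto_natCast_atTop_atTop
  exact tendsto_nhds_unique t1 (t2.mono_left hU)

lemma sInt_eq {α : Type*} [MeasurableSpace α] (s : SignedMeasure α) (μ ν : Measure α)
    [IsFiniteMeasure μ] [IsFiniteMeasure ν] (c : ℝ)
    (h : ∀ A, MeasurableSet A → s A = c * (μ.real A - ν.real A)) (f : α → ℝ)
    (h1 : Integrable f s.totalVariation) (h2 : Integrable f μ) (h3 : Integrable f ν) :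
    sInt s f = c * (∫ x, f x ∂μ - ∫ x, f x ∂ν) := by
  have h1p : Integrable f s.toJordanDecomposition.posPart := h1.left_of_add_measure
  have h1n : Integrable f s.toJordanDecomposition.negPart := h1.right_of_add_measure
  let m : Fin 4 → Measure α :=
    ![s.toJordanDecomposition.posPart, s.toJordanDecomposition.negPart, μ, ν]
  have : ∀ a, IsFiniteMeasure (m a) := by
    intro a; fin_cases a <;> simp [m] <;> infer_instance
  have := comb_zero ![1, -1, -c, c] m (fun A hA => by
    have := h A hA
    rw [s.apply_eq_posPart_real_sub_negPart_real hA] at this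
    simp [Fin.sum_univ_four, m]
    linarith) f (fun a => by fin_cases a <;> simp [m] <;> assumption)
  simp [Fin.sum_univ_four, m] at this
  rw [sInt]
  linarith

lemma totalVariation_null {α : Type*} [MeasurableSpace α] (s : SignedMeasure α) (ρ : Measure α)
    (h : ∀ A, MeasurableSet A → ρ A = 0 → s A = 0) : s.totalVariation ≪ ρ := by
  have := (SignedMeasure.absolutelyContinuous_ennreal_iff s ρ.toENNRealVectorMeasure).1
    (VectorMeasure.AbsolutelyContinuous.mk fun A hA h0 => h A hA (by
      rwa [Measure.toENNRealVectorMeasure_apply_measurable hA] at h0))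
  rwa [VectorMeasure.ennrealToMeasure_toENNRealVectorMeasure] at this

lemma integrable_of_supp (ρ : Measure ℝ) [IsFiniteMeasure ρ] (h : ρ (Set.Icc (0 : ℝ) 1)ᶜ = 0)
    (f : ℝ → ℝ) (hf : Continuous f) : Integrable f ρ := by
  obtain ⟨C, hC⟩ := isCompact_Icc.exists_bound_of_continuousOn (s := Set.Icc (0:ℝ) 1) hf.continuousOn
  have hae : ∀ᵐ x ∂ρ, x ∈ Set.Icc (0 : ℝ) 1 := by rw [ae_iff]; exact h
  exact Integrable.of_bound hf.aestronglyMeasurable C (hae.mono fun x hx => hC x hx)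

open scoped MatrixOrder Matrix.Norms.L2Operator in
lemma trace_mul_nonneg' {t : ℕ} (G M : Matrix (Fin t) (Fin t) ℝ) (hG : G.PosSemidef)
    (hM : M.PosSemidef) : 0 ≤ (G * M).trace := by
  obtain ⟨B, rfl⟩ := CStarAlgebra.nonneg_iff_eq_star_mul_self.mp hG.nonneg
  rw [Matrix.star_eq_conjTranspose, Matrix.mul_assoc, Matrix.trace_mul_comm]
  exact (hM.mul_mul_conjTranspose_same B).trace_nonneg

lemma forward_dir (t : ℕ) (S : ℕ → Matrix (Fin t) (Fin t) ℝ)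
    (h : IsMatMomentSeq S (Set.Icc (0 : ℝ) 1))
    (G : Matrix (Fin t) (Fin t) ℝ) (hG : G.PosDef) (k l : ℕ) :
    0 ≤ ∑ i ∈ Finset.range (k + 1),
          (-1 : ℝ) ^ i * (k.choose i : ℝ) * (G * S (i + l)).trace := by
  obtain ⟨E, hE, hsupp, hmom⟩ := h
  have hp : ∀ a b, (E a b).toJordanDecomposition.posPart (Set.Icc (0 : ℝ) 1)ᶜ = 0 := fun a b => by
    have := hsupp a b
    rw [SignedMeasure.totalVariation, Measure.add_apply, add_eq_zero] at this
    exact this.1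
  have hn : ∀ a b, (E a b).toJordanDecomposition.negPart (Set.Icc (0 : ℝ) 1)ᶜ = 0 := fun a b => by
    have := hsupp a b
    rw [SignedMeasure.totalVariation, Measure.add_apply, add_eq_zero] at this
    exact this.2
  let f : ℝ → ℝ := fun x => x ^ l * (1 - x) ^ k
  have hfc : Continuous f := by fun_prop
  have hfe : ∀ x, f x = ∑ i ∈ Finset.range (k + 1), (-1 : ℝ) ^ i * (k.choose i : ℝ) * x ^ (i + l) := by
    intro x
    simp only [f]
    rw [sub_eq_neg_add, add_pow, Finset.mul_sum]
    refine Finset.sum_congr rfl fun i _ => ?_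
    rw [neg_pow x]; ring
  have hint : ∀ ρ : Measure ℝ, IsFiniteMeasure ρ → ρ (Set.Icc (0 : ℝ) 1)ᶜ = 0 → ∫ x, f x ∂ρ =
      ∑ i ∈ Finset.range (k + 1), (-1 : ℝ) ^ i * (k.choose i : ℝ) * ∫ x, x ^ (i + l) ∂ρ := by
    intro ρ _ hρ
    simp only [hfe]
    rw [integral_finsetSum]
    · simp only [integral_const_mul]
    · intro i _
      exact integrable_of_supp ρ hρ _ (by fun_prop)
  have hs : ∀ a b, sInt (E a b) f =
      ∑ i ∈ Finset.range (k + 1), (-1 : ℝ) ^ i * (k.choose i : ℝ) * S (i + l) a b := by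
    intro a b
    rw [sInt, hint _ inferInstance (hp a b), hint _ inferInstance (hn a b),
      ← Finset.sum_sub_distrib]
    refine Finset.sum_congr rfl fun i _ => ?_
    rw [hmom, sInt]; ring
  have hsum : ∑ i ∈ Finset.range (k + 1),
          (-1 : ℝ) ^ i * (k.choose i : ℝ) * (G * S (i + l)).trace =
      ∑ a, ∑ b, G a b * sInt (E b a) f := by
    simp only [hs, Matrix.trace, Matrix.diag, Matrix.mul_apply, Finset.mul_sum]
    rw [Finset.sum_comm]
    refine Finset.sum_congr rfl fun a _ => ?_
    rw [Finset.sum_comm]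
    refine Finset.sum_congr rfl fun b _ => Finset.sum_congr rfl fun i _ => by ring
  rw [hsum]
  let m : (Fin t × Fin t) × Bool → Measure ℝ := fun p => bif p.2 then
    (E p.1.2 p.1.1).toJordanDecomposition.posPart else (E p.1.2 p.1.1).toJordanDecomposition.negPart
  let c : (Fin t × Fin t) × Bool → ℝ := fun p => bif p.2 then G p.1.1 p.1.2 else - G p.1.1 p.1.2
  have : ∀ p, IsFiniteMeasure (m p) := by
    rintro ⟨p, _ | _⟩ <;> simp only [m, cond_true, cond_false] <;> infer_instance
  have hm0 : ∀ p, m p (Set.Icc (0 : ℝ) 1)ᶜ = 0 := by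
    rintro ⟨p, _ | _⟩ <;> simp only [m, cond_true, cond_false, hp, hn]
  have key := comb_nonneg c m (fun A hA => by
    have := trace_mul_nonneg' G _ hG.posSemidef (hE A hA)
    simp only [Matrix.trace, Matrix.diag, Matrix.mul_apply, Matrix.of_apply] at this
    simp only [Fintype.sum_prod_type, Fintype.sum_bool, c, m, cond_true, cond_false]
    convert this using 1
    refine Finset.sum_congr rfl fun a _ => Finset.sum_congr rfl fun b _ => ?_
    rw [(E b a).apply_eq_posPart_real_sub_negPart_real hA]; ring) f
    (fun p => integrable_of_supp _ (hm0 p) f hfc) (fun p => by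
      have hae : ∀ᵐ x ∂(m p), x ∈ Set.Icc (0 : ℝ) 1 := by rw [ae_iff]; exact hm0 p
      refine hae.mono fun x hx => ?_
      exact mul_nonneg (pow_nonneg hx.1 _) (pow_nonneg (sub_nonneg.2 hx.2) _))
  simp only [Fintype.sum_prod_type, Fintype.sum_bool, c, m, cond_true, cond_false] at key
  convert key using 1
  refine Finset.sum_congr rfl fun a _ => Finset.sum_congr rfl fun b _ => ?_
  rw [sInt]; ring

lemma quad_cond (t : ℕ) (S : ℕ → Matrix (Fin t) (Fin t) ℝ)
    (h : ∀ G : Matrix (Fin t) (Fin t) ℝ, G.PosDef → ∀ k l : ℕ,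
        0 ≤ ∑ i ∈ Finset.range (k + 1),
          (-1 : ℝ) ^ i * (k.choose i : ℝ) * (G * S (i + l)).trace)
    (v : Fin t → ℝ) (k l : ℕ) : 0 ≤ ∑ i ∈ Finset.range (k + 1),
          (-1 : ℝ) ^ i * (k.choose i : ℝ) * (v ⬝ᵥ (S (i + l)).mulVec v) := by
  set a := ∑ i ∈ Finset.range (k + 1),
          (-1 : ℝ) ^ i * (k.choose i : ℝ) * (v ⬝ᵥ (S (i + l)).mulVec v) with ha
  set b := ∑ i ∈ Finset.range (k + 1), (-1 : ℝ) ^ i * (k.choose i : ℝ) * (S (i + l)).trace with hb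
  have key : ∀ ε : ℝ, 0 < ε → 0 ≤ a + ε * b := by
    intro ε hε
    have hpd : (Matrix.vecMulVec v v + ε • (1 : Matrix (Fin t) (Fin t) ℝ)).PosDef := by
      refine Matrix.PosDef.posSemidef_add ?_ (Matrix.PosDef.one.smul hε)
      simpa using Matrix.posSemidef_vecMulVec_self_star v
    have := h _ hpd k l
    convert this using 1
    rw [ha, hb, Finset.mul_sum, ← Finset.sum_add_distrib]
    refine Finset.sum_congr rfl fun i _ => ?_
    rw [add_mul, Matrix.trace_add, Matrix.vecMulVec_mul, Matrix.trace_vecMulVec, smul_mul_assoc,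
      one_mul, Matrix.trace_smul, Matrix.dotProduct_mulVec, smul_eq_mul, dotProduct_comm v]
    ring
  by_contra hneg
  push Not at hneg
  have h1 := key (-a / (2 * (|b| + 1))) (div_pos (by linarith) (by positivity))
  have h2 : -a / (2 * (|b| + 1)) * b ≤ -a / 2 := by
    rw [div_mul_eq_mul_div, div_le_div_iff₀ (by positivity) (by norm_num)]
    nlinarith [le_abs_self b]
  linarith

lemma polar {t : ℕ} (M : Matrix (Fin t) (Fin t) ℝ) (hM : M.IsSymm) (i j : Fin t) :
    ((Pi.single i 1 + Pi.single j 1 : Fin t → ℝ) ⬝ᵥ M.mulVec (Pi.single i 1 + Pi.single j 1)) -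
    ((Pi.single i 1 - Pi.single j 1 : Fin t → ℝ) ⬝ᵥ M.mulVec (Pi.single i 1 - Pi.single j 1))
      = 4 * M i j := by
  have := hM.apply i j
  simp [Matrix.mulVec_add, Matrix.mulVec_sub, add_dotProduct, sub_dotProduct, dotProduct_add,
    dotProduct_sub]
  linarith

open unitInterval in
lemma backward_dir (t : ℕ)
    (S : ℕ → Matrix (Fin t) (Fin t) ℝ) (hS : ∀ i, (S i).IsSymm)
    (h : ∀ G : Matrix (Fin t) (Fin t) ℝ, G.PosDef → ∀ k l : ℕ,
        0 ≤ ∑ i ∈ Finset.range (k + 1),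
          (-1 : ℝ) ^ i * (k.choose i : ℝ) * (G * S (i + l)).trace) :
    IsMatMomentSeq S (Set.Icc (0 : ℝ) 1) := by
  choose μ hfin hμ using fun v : Fin t → ℝ =>
    hausdorff (fun n => v ⬝ᵥ (S n).mulVec v) (quad_cond t S h v)
  let P : Fin t → Fin t → Measure I := fun i j => μ (Pi.single i 1 + Pi.single j 1)
  let N : Fin t → Fin t → Measure I := fun i j => μ (Pi.single i 1 - Pi.single j 1)
  let E : Fin t → Fin t → SignedMeasure ℝ := fun i j => (1 / 4 : ℝ) •
    (((P i j).map Subtype.val).toSignedMeasure - ((N i j).map Subtype.val).toSignedMeasure)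
  have hE : ∀ i j A, MeasurableSet A → E i j A =
      (1 / 4) * (((P i j).map Subtype.val).real A - ((N i j).map Subtype.val).real A) := by
    intro i j A hA
    simp [E, Measure.toSignedMeasure_apply_measurable hA]
  have hE' : ∀ i j A, MeasurableSet A → E i j A =
      (1 / 4) * ((P i j).real (Subtype.val ⁻¹' A) - (N i j).real (Subtype.val ⁻¹' A)) := by
    intro i j A hA
    rw [hE i j A hA, map_measureReal_apply measurable_subtype_coe hA,
      map_measureReal_apply measurable_subtype_coe hA]
  have hnull : ∀ ρ : Measure I, (ρ.map Subtype.val) (Set.Icc (0 : ℝ) 1)ᶜ = 0 := by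
    intro ρ
    rw [Measure.map_apply measurable_subtype_coe measurableSet_Icc.compl]
    convert measure_empty (μ := ρ)
    ext x; simp
  have hsupp : SuppSubset E (Set.Icc (0 : ℝ) 1) := by
    intro i j
    refine totalVariation_null (E i j) ((P i j).map Subtype.val + (N i j).map Subtype.val)
      (fun A hA h0 => ?_) ?_
    · rw [Measure.add_apply, add_eq_zero] at h0
      rw [hE i j A hA, measureReal_def, measureReal_def, h0.1, h0.2]
      simp
    · rw [Measure.add_apply, hnull, hnull, add_zero]
  refine ⟨E, ?_, hsupp, ?_⟩
  · intro A hA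
    have hA' : MeasurableSet (Subtype.val ⁻¹' A : Set I) := measurable_subtype_coe hA
    refine Matrix.PosSemidef.of_dotProduct_mulVec_nonneg ?_ fun v => ?_
    · ext i j
      simp only [Matrix.conjTranspose_apply, Matrix.of_apply, star_trivial]
      have hP : P j i = P i j := by simp only [P, add_comm]
      have hN : N j i = N i j := by
        refine ext_moments _ _ fun n => ?_
        simp only [N, hμ]
        rw [← neg_sub (Pi.single i 1 : Fin t → ℝ), Matrix.mulVec_neg, dotProduct_neg, neg_dotProduct, neg_neg]
      rw [hE' j i A hA, hE' i j A hA, hP, hN]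
    · let m : Option ((Fin t × Fin t) × Bool) → Measure I := fun o => o.elim (μ v) fun p =>
        bif p.2 then P p.1.1 p.1.2 else N p.1.1 p.1.2
      let c : Option ((Fin t × Fin t) × Bool) → ℝ := fun o => o.elim (-1) fun p =>
        bif p.2 then v p.1.1 * v p.1.2 / 4 else - (v p.1.1 * v p.1.2 / 4)
      have : ∀ o, IsFiniteMeasure (m o) := by
        rintro (_ | ⟨p, _ | _⟩)
        · exact hfin v
        · exact hfin _
        · exact hfin _
      have key := comb_moments c m (fun n => by
        simp only [Fintype.sum_option, Fintype.sum_prod_type, Fintype.sum_bool, c, m, Option.elim,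
          cond_true, cond_false, hμ, P, N]
        rw [neg_one_mul, neg_add_eq_zero]
        simp only [dotProduct, Matrix.mulVec, Finset.mul_sum]
        refine Finset.sum_congr rfl fun i _ => Finset.sum_congr rfl fun j _ => ?_
        have := polar (S n) (hS n) i j
        simp only [dotProduct, Matrix.mulVec, Finset.mul_sum] at this
        simp only [← Finset.mul_sum] at this ⊢
        linear_combination (-(v i * v j / 4)) * this) _ hA'
      simp only [Fintype.sum_option, Fintype.sum_prod_type, Fintype.sum_bool, c, m, Option.elim,
          cond_true, cond_false] at key
      rw [neg_one_mul, neg_add_eq_zero] at key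
      have hnn : 0 ≤ (μ v).real (Subtype.val ⁻¹' A) := measureReal_nonneg
      rw [key] at hnn
      refine hnn.trans_eq ?_
      symm
      simp only [star_trivial, dotProduct, Matrix.mulVec, Finset.mul_sum, Matrix.of_apply]
      refine Finset.sum_congr rfl fun i _ => Finset.sum_congr rfl fun j _ => ?_
      rw [hE' i j A hA]; ring
  · intro k i j
    have hc : Continuous fun x : ℝ => x ^ k := by fun_prop
    have : IsFiniteMeasure (E i j).totalVariation := by
      unfold SignedMeasure.totalVariation; infer_instance
    rw [sInt_eq (E i j) ((P i j).map Subtype.val) ((N i j).map Subtype.val) (1 / 4) (hE i j) _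
      (integrable_of_supp _ (hsupp i j) _ hc) (integrable_of_supp _ (hnull _) _ hc)
      (integrable_of_supp _ (hnull _) _ hc),
      integral_map measurable_subtype_coe.aemeasurable hc.aestronglyMeasurable,
      integral_map measurable_subtype_coe.aemeasurable hc.aestronglyMeasurable]
    simp only [P, N, hμ]
    rw [polar (S k) (hS k) i j]; ring

/-- a sequence `S` of symmetric matrices is a matrix-valued `[0,1]`-moment
sequence iff `Σᵢ (-1)^i C(k,i) tr(G S_{i+l}) ≥ 0` for all positive definite `G`
and all `k, l ∈ ℕ`. -/
theorem matMomentSeq_unit_interval_iff (t : ℕ)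
    (S : ℕ → Matrix (Fin t) (Fin t) ℝ) (hS : ∀ i, (S i).IsSymm) :
    IsMatMomentSeq S (Set.Icc (0 : ℝ) 1) ↔
      ∀ G : Matrix (Fin t) (Fin t) ℝ, G.PosDef → ∀ k l : ℕ,
        0 ≤ ∑ i ∈ Finset.range (k + 1),
          (-1 : ℝ) ^ i * (k.choose i : ℝ) * (G * S (i + l)).trace := by
  exact ⟨fun h G hG k l => forward_dir t S h G hG k l, backward_dir t S hS⟩
end

section
/- Let K = {x ∈ ℝⁿ : L₁(x) ≥ 0, …, L_m(x) ≥ 0} be a convex, compact polyhedron with non-empty interior, defined by linear polynomials L₁, …, L_m ∈ ℝ[X₁,…,Xₙ]. Let F ∈ S_t(ℝ[X₁,…,Xₙ]) be a symmetric matrix polynomial of degree d > 0 such that F(x) is positive definite for all x ∈ K. Then there exist a positive integer N and positive definite matrices G_α ∈ M_t(ℝ), for α ∈ ℕ₀^m with |α| = 0, …, N+d, such that F(X) = Σ_{|α|=0}^{N+d} G_α L₁^{α₁} ⋯ L_m^{α_m}. -/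
open MvPolynomial

theorem lemA {ι : Type*} {n : ℕ} (a0 : ι → ℝ) (a : ι → Fin n → ℝ) 
   (hb : Bornology.IsBounded {x : Fin n → ℝ | ∀ i, 0 ≤ a0 i + ∑ j, a i j * x j})
   (x0 x1 : Fin n → ℝ) (h0 : ∀ i, 0 ≤ a0 i + ∑ j, a i j * x0 j)
   (h1 : ∀ i, 0 ≤ a0 i + ∑ j, a i j * x1 j) (hne : x0 ≠ x1)
   (s : ℝ) (v : Fin n → ℝ) (hs : s ≤ 0) (h : ∀ i, 0 ≤ s * a0 i + ∑ j, a i j * v j) :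
   s = 0 ∧ v = 0 := by
  have key : ∀ x : Fin n → ℝ, (∀ i, 0 ≤ a0 i + ∑ j, a i j * x j) → v = s • x := by
    intro x hx
    by_contra hv
    have hw : v - s • x ≠ 0 := sub_ne_zero.2 hv
    obtain ⟨j, hj⟩ : ∃ j, (v - s • x) j ≠ 0 := by
      by_contra hc
      push Not at hc
      exact hw (funext hc)
    obtain ⟨R, hR⟩ := hb.exists_norm_le
    have hmem : ∀ r : ℝ, 0 ≤ r → ‖x + r • (v - s • x)‖ ≤ R := by
      intro r hr
      apply hR
      intro i
      have e : a0 i + ∑ j, a i j * (x + r • (v - s • x)) j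
        = (a0 i + ∑ j, a i j * x j) + r * ((s * a0 i + ∑ j, a i j * v j) + (-s) * (a0 i + ∑ j, a i j * x j)) := by
        simp only [Pi.add_apply, Pi.smul_apply, Pi.sub_apply, smul_eq_mul, mul_add, mul_sub, Finset.sum_add_distrib, Finset.sum_sub_distrib, Finset.mul_sum]
        have e1 : ∑ j, a i j * (r * v j) = ∑ j, r * (a i j * v j) := by congr 1; ext; ring
        have e2 : ∑ j, a i j * (r * (s * x j)) = - ∑ j, r * (-s * (a i j * x j)) := by rw [← Finset.sum_neg_distrib]; congr 1; ext; ring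
        rw [e1, e2]; ring
      rw [e]
      have := hx i
      have := h i
      have hs' : 0 ≤ -s := by linarith
      positivity
    have h2 : ∀ r : ℝ, 0 ≤ r → |x j + r * (v - s • x) j| ≤ R := fun r hr =>
      (norm_le_pi_norm (x + r • (v - s • x)) j).trans (hmem r hr)
    have hx := (norm_le_pi_norm x j).trans (by simpa using hmem 0 le_rfl)
    rw [Real.norm_eq_abs] at hx
    have hR0 : 0 ≤ R := (abs_nonneg _).trans hx
    have := h2 ((2 * R + 1) / |(v - s • x) j|) (by positivity)
    have h3 : |(2 * R + 1) / |(v - s • x) j| * (v - s • x) j| = 2 * R + 1 := by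
      rw [abs_mul, abs_div, abs_abs, div_mul_cancel₀ _ (by simpa using hj), abs_of_nonneg (by linarith)]
    have h4 := abs_sub (x j + (2 * R + 1) / |(v - s • x) j| * (v - s • x) j) (x j)
    rw [add_sub_cancel_left, h3] at h4
    linarith
  have e0 := key x0 h0
  have e1 := key x1 h1
  have : s • (x0 - x1) = 0 := by rw [smul_sub, ← e0, ← e1, sub_self]
  have hs0 : s = 0 := (smul_eq_zero.1 this).resolve_right (sub_ne_zero.2 hne)
  exact ⟨hs0, by rw [e0, hs0, zero_smul]⟩

theorem lemB {ι : Type*} [Fintype ι] {n : ℕ} (a0 : ι → ℝ) (a : ι → Fin n → ℝ) 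
   (hb : Bornology.IsBounded {x : Fin n → ℝ | ∀ i, 0 ≤ a0 i + ∑ j, a i j * x j})
   (x0 x1 : Fin n → ℝ) (h0 : ∀ i, 0 ≤ a0 i + ∑ j, a i j * x0 j)
   (h1 : ∀ i, 0 ≤ a0 i + ∑ j, a i j * x1 j) (hne : x0 ≠ x1) :
   (∃ c : ι → ℝ, (∀ i, 0 < c i) ∧ ∑ i, c i * a0 i = 1 ∧ ∀ j, ∑ i, c i * a i j = 0) ∧
   (∀ (w0 : ℝ) (w : Fin n → ℝ), ∃ c : ι → ℝ, ∑ i, c i * a0 i = w0 ∧ ∀ j : Fin n, ∑ i, c i * a i j = w j) := by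
  let T : (ι → ℝ) →ₗ[ℝ] (ℝ × (Fin n → ℝ)) := Fintype.linearCombination ℝ (fun i => (a0 i, a i))
  have hT : ∀ c, T c = (∑ i, c i * a0 i, fun j => ∑ i, c i * a i j) := by
    intro c
    simp only [T, Fintype.linearCombination_apply]
    ext <;> simp [Prod.fst_sum, Prod.snd_sum]
  have hφ : ∀ φ : (ℝ × (Fin n → ℝ)) →ₗ[ℝ] ℝ, ∀ w0 w, φ (w0, w) = φ (1, 0) * w0 + ∑ j, w j * φ (0, Pi.single j 1) := by
    intro φ w0 w
    have e : ((w0, w) : ℝ × (Fin n → ℝ)) = w0 • ((1:ℝ), (0 : Fin n → ℝ)) + ∑ j, w j • ((0:ℝ), (Pi.single j 1 : Fin n → ℝ)) := by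
      ext <;> simp [Prod.fst_sum, Prod.snd_sum, Pi.single_apply]
    conv_lhs => rw [e]
    simp only [map_add, map_sum, map_smul, smul_eq_mul, mul_comm]
  have main : ∀ φ : (ℝ × (Fin n → ℝ)) →ₗ[ℝ] ℝ, φ (1,0) ≤ 0 → (∀ i, 0 ≤ φ (a0 i, a i)) → φ = 0 := by
    intro φ hs hi
    have := lemA a0 a hb x0 x1 h0 h1 hne (φ (1,0)) (fun j => φ (0, Pi.single j 1)) hs (fun i => by rw [← hφ]; exact hi i)
    ext w
    · simp [this.1]
    · have := congrFun this.2 w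
      simpa using this
  have hTi : ∀ i, ∃ c, T c = (a0 i, a i) := by
    classical
    intro i
    refine ⟨Pi.single i 1, ?_⟩
    rw [hT]; ext <;> simp [Pi.single_apply]
  have hsurj : Function.Surjective T := by
    rw [← LinearMap.range_eq_top]
    by_contra hne
    obtain ⟨f, hf, hle⟩ := Submodule.exists_le_ker_of_lt_top _ (lt_top_iff_ne_top.2 hne)
    have hz : ∀ i, f (a0 i, a i) = 0 := by
      intro i
      obtain ⟨c, hc⟩ := hTi i
      rw [← hc]
      exact hle ⟨c, rfl⟩
    rcases le_total (f (1,0)) 0 with h | h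
    · exact hf (main f h fun i => (hz i).ge)
    · exact hf (neg_eq_zero.1 (main (-f) (by simpa using h) fun i => by simp [hz i]))
  refine ⟨?_, fun w0 w => ?_⟩
  · have hopen : IsOpenMap T := T.isOpenMap_of_finiteDimensional hsurj
    let P : Set (ι → ℝ) := Set.pi Set.univ (fun _ => Set.Ioi 0)
    have hP : IsOpen P := isOpen_set_pi Set.finite_univ (fun _ _ => isOpen_Ioi)
    have hPc : Convex ℝ P := convex_pi (fun _ _ => convex_Ioi 0)
    by_cases hin : ((1:ℝ), (0 : Fin n → ℝ)) ∈ T '' P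
    · obtain ⟨c, hc, e⟩ := hin
      rw [hT] at e
      refine ⟨c, fun i => hc i trivial, congrArg Prod.fst e, fun j => congrFun (congrArg Prod.snd e) j⟩
    · exfalso
      obtain ⟨f, hf⟩ := geometric_hahn_banach_open_point (hPc.linear_image T) (hopen _ hP) hin
      have hf' : ∀ c ∈ P, f (T c) < f (1, 0) := fun c hc => hf _ ⟨c, hc, rfl⟩
      have h1P : (fun _ => 1 : ι → ℝ) ∈ P := fun i _ => by simp
      have hsm : ∀ c ∈ P, ∀ r : ℝ, 0 < r → r * f (T c) < f (1, 0) := by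
        intro c hc r hr
        have := hf' (r • c) (fun i _ => by simpa using mul_pos hr (hc i trivial))
        simpa using this
      have hneg : ∀ c ∈ P, f (T c) ≤ 0 := by
        intro c hc
        by_contra! hcon
        have := hsm c hc ((|f (1,0)| + 1)/ f (T c)) (by positivity)
        rw [div_mul_cancel₀ _ hcon.ne'] at this
        linarith [le_abs_self (f ((1:ℝ), (0 : Fin n → ℝ)))]
      have hclos : ∀ c : ι → ℝ, (∀ i, 0 ≤ c i) → f (T c) ≤ 0 := by
        intro c hc
        by_contra! hcon
        have h1 := hneg _ h1P
        set A := f (T fun _ => 1)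
        have := hneg (c + (f (T c) / (2 * (|A| + 1))) • (fun _ => 1)) (fun i _ => by
          have := hc i
          simp only [Pi.add_apply, Pi.smul_apply, smul_eq_mul, mul_one, Set.mem_Ioi]
          positivity)
        rw [map_add, map_add, map_smul, map_smul, smul_eq_mul] at this
        change f (T c) + _ * A ≤ 0 at this
        have h2 : -A ≤ |A| := neg_le_abs A
        have h3 : f (T c) / (2 * (|A| + 1)) * A ≥ - (f (T c) / 2) := by
          have : f (T c) / (2 * (|A| + 1)) * (A + (|A| + 1)) ≥ 0 := by
            apply mul_nonneg (by positivity); linarith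
          have e : f (T c) / (2 * (|A| + 1)) * (|A| + 1) = f (T c) / 2 := by field_simp
          linarith
        linarith
      have hge : 0 ≤ f (1, 0) := by
        by_contra! hcon
        have h1 := hneg _ h1P
        have := hsm _ h1P (-f (1,0) / (2 * (|f (T fun _ => 1)| + 1))) (by apply div_pos <;> [linarith; positivity])
        set A := f (T fun _ => 1)
        set B := f (1,0)
        have h2 : -A ≤ |A| := neg_le_abs A
        have h3 : -B / (2 * (|A| + 1)) * A ≥ - (-B / 2) := by
          have : -B / (2 * (|A| + 1)) * (A + (|A| + 1)) ≥ 0 := by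
            apply mul_nonneg (div_nonneg (by linarith) (by positivity)); linarith
          have e : -B / (2 * (|A| + 1)) * (|A| + 1) = -B / 2 := by field_simp
          linarith
        linarith
      have h0 := main (-(f : (ℝ × (Fin n → ℝ)) →ₗ[ℝ] ℝ)) (by simpa using hge) (fun i => by
        classical
        have : T (Pi.single i 1) = (a0 i, a i) := by rw [hT]; ext <;> simp [Pi.single_apply]
        have h2 := hclos (Pi.single i 1) (fun j => by by_cases h : j = i <;> simp [h])
        rw [this] at h2
        simpa using h2)
      have hz : ∀ x, f x = 0 := fun x => by
        have := LinearMap.congr_fun h0 x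
        simpa using this
      have := hf' _ h1P
      rw [hz, hz] at this
      exact lt_irrefl _ this
  · obtain ⟨c, hc⟩ := hsurj (w0, w)
    rw [hT] at hc
    exact ⟨c, congrArg Prod.fst hc, fun j => congrFun (congrArg Prod.snd hc) j⟩

theorem lin_eq {n : ℕ} (p : MvPolynomial (Fin n) ℝ) (h : p.totalDegree ≤ 1) :
    p = C (p.coeff 0) + ∑ j, C (p.coeff (Finsupp.single j 1)) * X j := by
  classical
  ext e
  simp only [coeff_add, coeff_C, coeff_sum, coeff_C_mul, coeff_X]
  by_cases he : e = 0
  · subst he; simp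
  by_cases h1 : ∃ j, e = Finsupp.single j 1
  · obtain ⟨j, rfl⟩ := h1
    simp [Finsupp.single_left_inj, Ne.symm he]
  · have : p.coeff e = 0 := by
      by_contra hc
      have := le_totalDegree (mem_support_iff.2 hc)
      have h2 : ∑ k, e k ≤ 1 := by
        have := this.trans h
        rwa [Finsupp.sum_fintype _ _ (fun _ => rfl)] at this
      obtain ⟨j, hj⟩ : ∃ j, e j ≠ 0 := by
        by_contra hcon
        push Not at hcon
        exact he (Finsupp.ext hcon)
      apply h1
      refine ⟨j, ?_⟩
      ext k
      have h3 := Finset.sum_erase_add Finset.univ (fun k => e k) (Finset.mem_univ j)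
      by_cases hk : k = j
      · subst hk
        rw [Finsupp.single_eq_same]
        omega
      · have h4 : e k ≤ ∑ k ∈ Finset.univ.erase j, e k :=
          Finset.single_le_sum (f := fun k => e k) (fun _ _ => Nat.zero_le _) (Finset.mem_erase.2 ⟨hk, Finset.mem_univ k⟩)
        rw [Finsupp.single_eq_of_ne hk]
        omega
    rw [this, if_neg (Ne.symm he), zero_add]
    symm
    apply Finset.sum_eq_zero
    intro j _
    rw [if_neg (fun hh => h1 ⟨j, hh.symm⟩), mul_zero]

theorem mult_succ {ι : Type*} [Fintype ι] [DecidableEq ι] (α : ι → ℕ) (i : ι) :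
    Nat.multinomial Finset.univ (α + (Pi.single i 1 : ι → ℕ)) * (α i + 1) = 
      Nat.multinomial Finset.univ α * (∑ j, α j + 1) := by
  have h1 := Nat.multinomial_spec Finset.univ α
  have h2 := Nat.multinomial_spec Finset.univ (α + (Pi.single i 1 : ι → ℕ))
  have h3 : ∑ j, (α + (Pi.single i 1 : ι → ℕ)) j = ∑ j, α j + 1 := by
    simp [Finset.sum_add_distrib]
  have h4 : ∏ j, ((α + (Pi.single i 1 : ι → ℕ)) j).factorial = (α i + 1) * ∏ j, (α j).factorial := by
    rw [← Finset.mul_prod_erase _ _ (Finset.mem_univ i), ← Finset.mul_prod_erase _ (fun j => (α j).factorial) (Finset.mem_univ i)]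
    rw [Finset.prod_congr rfl (g := fun j => (α j).factorial)]
    · simp [Nat.factorial_succ]; ring
    · intro j hj
      simp [Pi.single_eq_of_ne (Finset.ne_of_mem_erase hj)]
  rw [h3, h4, Nat.factorial_succ, ← h1] at h2
  have hp : 0 < ∏ j, (α j).factorial := Finset.prod_pos fun _ _ => Nat.factorial_pos _
  apply Nat.eq_of_mul_eq_mul_left hp
  linarith

/-- The approximation claim. -/
def Approx {ι : Type*} [Fintype ι] [DecidableEq ι] {R : Type*} [CommRing R] [Algebra ℝ R]
    (ℓ : ι → R) (q : MvPolynomial ι ℝ) : Prop :=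
  ∀ ε : ℝ, 0 < ε → ∃ M0 : ℕ, ∀ M ≥ M0, ∃ b : (ι → ℕ) → ℝ,
    aeval ℓ q = ∑ α ∈ Finset.piAntidiag Finset.univ M,
      ((Nat.multinomial Finset.univ α : ℝ) * b α) • ∏ i, ℓ i ^ α i ∧
    ∀ α ∈ Finset.piAntidiag Finset.univ M, |b α - eval (fun i => (α i : ℝ) / M) q| ≤ ε

theorem simplex_mem {ι : Type*} [Fintype ι] {M : ℕ} (hM : 0 < M) (α : ι → ℕ) (h : ∑ i, α i = M) :
    (fun i => (α i : ℝ) / M) ∈ stdSimplex ℝ ι := by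
  refine ⟨fun i => by positivity, ?_⟩
  rw [← Finset.sum_div, ← Nat.cast_sum, h, div_self (by positivity)]

theorem approx {ι : Type*} [Fintype ι] [DecidableEq ι] {R : Type*} [CommRing R] [Algebra ℝ R]
    (ℓ : ι → R) (hℓ : ∑ i, ℓ i = 1) (q : MvPolynomial ι ℝ) : Approx ℓ q := by
  induction q using MvPolynomial.induction_on with
  | C a =>
    intro ε hε
    refine ⟨0, fun M _ => ⟨fun _ => a, ?_, ?_⟩⟩
    · have := Finset.sum_pow_eq_sum_piAntidiag Finset.univ ℓ M
      rw [hℓ, one_pow] at this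
      rw [aeval_C, Algebra.algebraMap_eq_smul_one, this, Finset.smul_sum]
      refine Finset.sum_congr rfl fun α _ => ?_
      rw [mul_comm _ a, mul_smul, ← nsmul_eq_mul, Nat.cast_smul_eq_nsmul]
    · intro α _
      simp [hε.le]
  | add p q hp hq =>
    intro ε hε
    obtain ⟨M1, h1⟩ := hp (ε/2) (by positivity)
    obtain ⟨M2, h2⟩ := hq (ε/2) (by positivity)
    refine ⟨max M1 M2, fun M hM => ?_⟩
    obtain ⟨b1, e1, l1⟩ := h1 M (le_trans (le_max_left _ _) hM)
    obtain ⟨b2, e2, l2⟩ := h2 M (le_trans (le_max_right _ _) hM)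
    refine ⟨b1 + b2, ?_, fun α hα => ?_⟩
    · rw [map_add, e1, e2, ← Finset.sum_add_distrib]
      refine Finset.sum_congr rfl fun α _ => ?_
      rw [← add_smul, Pi.add_apply, mul_add]
    · have h1 := abs_le.1 (l1 α hα)
      have h2 := abs_le.1 (l2 α hα)
      rw [map_add, Pi.add_apply, abs_le]
      constructor <;> linarith
  | mul_X p i hp =>
    intro ε hε
    obtain ⟨M1, h1⟩ := hp (ε/2) (by positivity)
    have huc := (isCompact_stdSimplex ℝ ι).uniformContinuousOn_of_continuous (MvPolynomial.continuous_eval p).continuousOn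
    obtain ⟨δ, hδ, huc⟩ := Metric.uniformContinuousOn_iff.1 huc (ε/2) (by positivity)
    obtain ⟨M2, hM2⟩ := exists_nat_gt (1/δ)
    refine ⟨max M1 (max M2 1) + 1, fun M' hM' => ?_⟩
    obtain ⟨M, rfl⟩ : ∃ M, M' = M + 1 := ⟨M' - 1, by omega⟩
    have hMM1 : M1 ≤ M := by omega
    have hMM2 : M2 ≤ M := by omega
    have hM1 : 1 ≤ M := by omega
    have hM0 : (0:ℝ) < M := by exact_mod_cast hM1
    obtain ⟨b, e, l⟩ := h1 M hMM1
    refine ⟨fun α => (α i : ℝ) / (M+1 : ℕ) * b (α - (Pi.single i 1 : ι → ℕ)), ?_, fun α hα => ?_⟩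
    · rw [map_mul, aeval_X, e, Finset.sum_mul]
      symm
      rw [← Finset.sum_filter_add_sum_filter_not _ (fun α => α i ≠ 0)]
      have hz : ∑ x ∈ Finset.piAntidiag Finset.univ (M + 1) with ¬x i ≠ 0,
        ((Nat.multinomial Finset.univ x : ℝ) * ((x i : ℝ) / (M + 1 : ℕ) * b (x - (Pi.single i 1 : ι → ℕ)))) • ∏ i, ℓ i ^ x i = 0 := by
        apply Finset.sum_eq_zero
        intro x hx
        have : x i = 0 := not_not.1 (Finset.mem_filter.1 hx).2
        simp [this]
      rw [hz, add_zero]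
      refine Finset.sum_nbij' (fun α => α - (Pi.single i 1 : ι → ℕ)) (fun α => α + (Pi.single i 1 : ι → ℕ)) ?_ ?_ ?_ ?_ ?_
      · intro α hα
        simp only [Finset.mem_filter, Finset.mem_piAntidiag, Finset.mem_univ, implies_true, and_true] at hα ⊢
        have hle : (Pi.single i 1 : ι → ℕ) ≤ α := by
          intro j
          by_cases h : j = i
          · subst h; simp; omega
          · simp [h]
        have : ∑ j, (α - (Pi.single i 1 : ι → ℕ) + (Pi.single i 1 : ι → ℕ)) j = M + 1 := by
          rw [tsub_add_cancel_of_le hle]; exact hα.1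
        simpa [Finset.sum_add_distrib] using this
      · intro α hα
        simp only [Finset.mem_filter, Finset.mem_piAntidiag, Finset.mem_univ, implies_true, and_true] at hα ⊢
        simp [Finset.sum_add_distrib, hα]
      · intro α hα
        have hα := (Finset.mem_filter.1 hα).2
        apply tsub_add_cancel_of_le
        intro j
        by_cases h : j = i
        · subst h; simp; omega
        · simp [h]
      · intro α _
        exact add_tsub_cancel_right _ _
      · intro α' hα'
        obtain ⟨α, rfl⟩ : ∃ α, α' = α + (Pi.single i 1 : ι → ℕ) := by
          have hα := (Finset.mem_filter.1 hα').2
          refine ⟨α' - (Pi.single i 1 : ι → ℕ), ?_⟩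
          symm
          apply tsub_add_cancel_of_le
          intro j
          by_cases h : j = i
          · subst h; simp; omega
          · simp [h]
        have hα := (Finset.mem_piAntidiag.1 (Finset.mem_filter.1 hα').1).1
        have hα : ∑ j, α j = M := by simpa [Finset.sum_add_distrib] using hα
        have hm := mult_succ α i
        rw [hα] at hm
        have hm' : (Nat.multinomial Finset.univ (α + (Pi.single i 1 : ι → ℕ)) : ℝ) * (α i + 1) = 
          (Nat.multinomial Finset.univ α : ℝ) * (M + 1) := by exact_mod_cast hm
        have hpr : ∏ j, ℓ j ^ (α + (Pi.single i 1 : ι → ℕ)) j = (∏ j, ℓ j ^ α j) * ℓ i := by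
          simp only [Pi.add_apply, pow_add, Finset.prod_mul_distrib]
          congr 1
          rw [Finset.prod_eq_single i]
          · simp
          · intro j _ hj; simp [hj]
          · simp
        rw [add_tsub_cancel_right, hpr, smul_mul_assoc]
        congr 1
        simp only [Pi.add_apply, Pi.single_eq_same]
        push_cast
        field_simp
        rw [add_tsub_cancel_right]
        linear_combination b α * hm'
    · have hsum := (Finset.mem_piAntidiag.1 hα).1
      simp only [map_mul, eval_X]
      rw [mul_comm (eval _ p), ← mul_sub, abs_mul]
      have hle1 : (α i : ℝ) / (M + 1 : ℕ) ≤ 1 := by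
        rw [div_le_one (by positivity)]
        have : α i ≤ M + 1 := by
          rw [← hsum]; exact Finset.single_le_sum (f := α) (fun _ _ => Nat.zero_le _) (Finset.mem_univ i)
        exact_mod_cast this
      by_cases hz : α i = 0
      · simp [hz, hε.le]
      obtain ⟨β, rfl⟩ : ∃ β, α = β + (Pi.single i 1 : ι → ℕ) := by
        refine ⟨α - (Pi.single i 1 : ι → ℕ), ?_⟩
        symm
        apply tsub_add_cancel_of_le
        intro j
        by_cases h : j = i
        · subst h; simp; omega
        · simp [h]
      have hβ : ∑ j, β j = M := by simpa [Finset.sum_add_distrib] using hsum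
      have hβ' : β ∈ Finset.piAntidiag Finset.univ M := by simp [Finset.mem_piAntidiag, hβ]
      rw [add_tsub_cancel_right]
      have l1 := l β hβ'
      have hd : dist (fun j => (β j : ℝ) / M) (fun j => ((β + (Pi.single i 1 : ι → ℕ)) j : ℝ) / (M + 1 : ℕ)) < δ := by
        rw [dist_pi_lt_iff hδ]
        intro j
        have hbj : (β j : ℝ) ≤ M := by
          have : β j ≤ M := by
            rw [← hβ]; exact Finset.single_le_sum (f := β) (fun _ _ => Nat.zero_le _) (Finset.mem_univ j)
          exact_mod_cast this
        have h1d : 1 < δ * M := by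
          have : 1 / δ < M := hM2.trans_le (by exact_mod_cast hMM2)
          rw [div_lt_iff₀ hδ] at this
          linarith
        obtain ⟨u, hu0, hu1, hu⟩ : ∃ u : ℝ, 0 ≤ u ∧ u ≤ 1 ∧ ((β + (Pi.single i 1 : ι → ℕ)) j : ℝ) = β j + u := by
          by_cases h : j = i
          · exact ⟨1, by simp, le_rfl, by subst h; simp⟩
          · exact ⟨0, le_rfl, by simp, by simp [h]⟩
        rw [hu, Real.dist_eq]
        push_cast
        have e : (β j : ℝ) / M - (β j + u) / (M + 1) = (β j - u * M) / (M * (M + 1)) := by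
          field_simp; ring
        rw [e, abs_div, abs_of_pos (show (0:ℝ) < M * (M+1) by positivity), div_lt_iff₀ (by positivity)]
        have h2 : |(β j : ℝ) - u * M| ≤ M := by
          rw [abs_le]
          have : u * M ≤ 1 * M := by gcongr
          have : 0 ≤ u * M := by positivity
          have : (0:ℝ) ≤ β j := by positivity
          constructor <;> linarith
        nlinarith
      have l2 := huc _ (simplex_mem hM1 β hβ) _ (simplex_mem (Nat.succ_pos M) _ hsum) hd
      rw [Real.dist_eq] at l2
      have h1 := abs_le.1 l1
      have h2 := abs_lt.1 l2
      have h3 : |b β - eval (fun j => ((β + (Pi.single i 1 : ι → ℕ)) j : ℝ) / (M + 1 : ℕ)) p| ≤ ε := by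
        rw [abs_le]
        constructor <;> linarith
      rw [abs_of_nonneg (by positivity)]
      calc _ ≤ 1 * ε := by gcongr
        _ = ε := one_mul _

theorem compact_pen {Z : Type*} [TopologicalSpace Z] {S : Set Z} (hS : IsCompact S)
    (f g : Z → ℝ) (hf : Continuous f) (hg : Continuous g) (hg0 : ∀ x ∈ S, 0 ≤ g x)
    (h : ∀ x ∈ S, g x = 0 → 0 < f x) :
    ∃ κ δ : ℝ, 0 < δ ∧ ∀ x ∈ S, δ ≤ f x + κ * g x := by
  rcases S.eq_empty_or_nonempty with rfl | hne
  · exact ⟨0, 1, one_pos, by simp⟩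
  suffices H : ∃ κ : ℝ, ∀ x ∈ S, 0 < f x + κ * g x by
    obtain ⟨κ, hκ⟩ := H
    obtain ⟨x, hx, hmin⟩ := hS.exists_isMinOn (f := fun x => f x + κ * g x) hne (by fun_prop)
    exact ⟨κ, _, hκ x hx, fun y hy => hmin hy⟩
  have hT : IsCompact (S ∩ f ⁻¹' Set.Iic 0) := hS.inter_right (isClosed_Iic.preimage hf)
  rcases (S ∩ f ⁻¹' Set.Iic 0).eq_empty_or_nonempty with he | hTne
  · refine ⟨0, fun x hx => ?_⟩
    by_contra! hc
    have : x ∈ S ∩ f ⁻¹' Set.Iic 0 := ⟨hx, by simpa using hc⟩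
    rw [he] at this
    exact this
  · obtain ⟨x1, hx1, hmin1⟩ := hT.exists_isMinOn hTne hg.continuousOn
    obtain ⟨x2, hx2, hmin2⟩ := hS.exists_isMinOn hne hf.continuousOn
    have hp : 0 < g x1 := by
      rcases (hg0 x1 hx1.1).lt_or_eq with h1 | h1
      · exact h1
      · exact absurd (h x1 hx1.1 h1.symm) (not_lt.2 hx1.2)
    refine ⟨(|f x2| + 1) / g x1, fun x hx => ?_⟩
    by_cases hfx : f x ≤ 0
    · have h1 : g x1 ≤ g x := hmin1 ⟨hx, hfx⟩
      have h2 : f x2 ≤ f x := hmin2 hx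
      have h3 : (|f x2| + 1) / g x1 * g x1 ≤ (|f x2| + 1) / g x1 * g x := by gcongr
      rw [div_mul_cancel₀ _ hp.ne'] at h3
      have := neg_abs_le (f x2)
      linarith
    · have := hg0 x hx
      push Not at hfx
      positivity

theorem quad_eq {t : ℕ} (A : Matrix (Fin t) (Fin t) ℝ) (v : Fin t → ℝ) :
    star v ⬝ᵥ A.mulVec v = ∑ i, ∑ j, v i * v j * A i j := by
  simp only [dotProduct, Matrix.mulVec, Finset.mul_sum, star_trivial]
  refine Finset.sum_congr rfl fun i _ => Finset.sum_congr rfl fun j _ => ?_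
  ring

theorem posDef_of_sphere {t : ℕ} (A : Matrix (Fin t) (Fin t) ℝ) (hA : ∀ i j, A i j = A j i)
    (h : ∀ v : Fin t → ℝ, ‖v‖ = 1 → 0 < ∑ i, ∑ j, v i * v j * A i j) : A.PosDef := by
  apply Matrix.PosDef.of_dotProduct_mulVec_pos
  · ext i j
    simp [hA j i]
  · intro x hx
    rw [quad_eq]
    have hn : 0 < ‖x‖ := norm_pos_iff.2 hx
    have := h (‖x‖⁻¹ • x) (by rw [norm_smul, norm_inv, norm_norm, inv_mul_cancel₀ hn.ne'])
    have e : ∑ i, ∑ j, x i * x j * A i j = ‖x‖ ^ 2 * ∑ i, ∑ j, (‖x‖⁻¹ • x) i * (‖x‖⁻¹ • x) j * A i j := by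
      simp only [Finset.mul_sum, Pi.smul_apply, smul_eq_mul]
      refine Finset.sum_congr rfl fun i _ => Finset.sum_congr rfl fun j _ => ?_
      field_simp
    rw [e]
    positivity

theorem core {n t : ℕ} {ι : Type*} [Fintype ι] [DecidableEq ι]
    (Lp : ι → MvPolynomial (Fin n) ℝ) (hlin : ∀ i, (Lp i).totalDegree ≤ 1)
    (hb : Bornology.IsBounded {x : Fin n → ℝ | ∀ i, 0 ≤ eval x (Lp i)})
    (x0 x1 : Fin n → ℝ) (h0 : ∀ i, 0 ≤ eval x0 (Lp i)) (h1 : ∀ i, 0 ≤ eval x1 (Lp i))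
    (hne : x0 ≠ x1)
    (F : Matrix (Fin t) (Fin t) (MvPolynomial (Fin n) ℝ)) (hsymm : F.IsSymm)
    (hpos : ∀ x, (∀ i, 0 ≤ eval x (Lp i)) → (F.map (MvPolynomial.eval x)).PosDef) :
    ∃ M0 : ℕ, ∀ M ≥ M0, ∃ G : (ι → ℕ) → Matrix (Fin t) (Fin t) ℝ,
      (∀ α : ι → ℕ, (∑ i, α i) = M → (G α).PosDef) ∧
      F = ∑ α ∈ Finset.piAntidiag Finset.univ M,
          (∏ i, (Lp i) ^ (α i)) • (G α).map MvPolynomial.C := by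
  set a0 : ι → ℝ := fun i => (Lp i).coeff 0 with ha0
  set a : ι → Fin n → ℝ := fun i j => (Lp i).coeff (Finsupp.single j 1) with ha
  have hLp : ∀ i, Lp i = C (a0 i) + ∑ j, C (a i j) * X j := fun i => lin_eq _ (hlin i)
  have hev : ∀ x i, eval x (Lp i) = a0 i + ∑ j, a i j * x j := by
    intro x i
    conv_lhs => rw [hLp i]
    simp
  simp only [hev] at hb h0 h1
  obtain ⟨⟨c, hc, hc0, hcj⟩, hsol⟩ := lemB a0 a hb x0 x1 h0 h1 hne
  have hcomb : ∀ e : ι → ℝ, ∑ i, C (e i) * Lp i = C (∑ i, e i * a0 i) + ∑ j, C (∑ i, e i * a i j) * X j := by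
    intro e
    simp only [map_sum, map_mul, Finset.sum_mul]
    rw [Finset.sum_comm, ← Finset.sum_add_distrib]
    refine Finset.sum_congr rfl fun i _ => ?_
    conv_lhs => rw [hLp i]
    rw [mul_add, Finset.mul_sum]
    simp only [mul_assoc]
  choose b hb0 hbj using fun j : Fin n => hsol 0 (Pi.single j 1)
  set ℓ : ι → MvPolynomial (Fin n) ℝ := fun i => C (c i) * Lp i with hℓdef
  have hℓ : ∑ i, ℓ i = 1 := by
    rw [hℓdef, hcomb, hc0]
    simp [hcj]
  set Bp : Fin n → MvPolynomial ι ℝ := fun j => ∑ i, C (b j i / c i) * X i with hBp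
  have hBℓ : ∀ j, aeval ℓ (Bp j) = X j := by
    intro j
    have : aeval ℓ (Bp j) = ∑ i, C (b j i) * Lp i := by
      simp only [hBp, map_sum, map_mul, aeval_X, aeval_C, hℓdef, MvPolynomial.algebraMap_eq]
      refine Finset.sum_congr rfl fun i _ => ?_
      rw [← mul_assoc, ← map_mul, div_mul_cancel₀ _ (hc i).ne']
    rw [this, hcomb, hb0]
    simp [hbj, Pi.single_apply]
  have hlift : ∀ p, aeval ℓ (aeval Bp p) = p := by
    intro p
    have h : (aeval ℓ).comp (aeval Bp) = AlgHom.id ℝ (MvPolynomial (Fin n) ℝ) := by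
      apply MvPolynomial.algHom_ext
      intro j
      simp only [AlgHom.comp_apply, aeval_X, hBℓ, AlgHom.id_apply]
    exact DFunLike.congr_fun h p
  have hevl : ∀ (y : ι → ℝ) p, eval y (aeval Bp p) = eval (fun j => eval y (Bp j)) p := by
    intro y p
    have h : (aeval y).comp (aeval Bp) = (aeval (fun j => eval y (Bp j)) : MvPolynomial (Fin n) ℝ →ₐ[ℝ] ℝ) := by
      apply MvPolynomial.algHom_ext
      intro j
      simp [MvPolynomial.aeval_eq_eval]
    have := DFunLike.congr_fun h p
    simpa [MvPolynomial.aeval_eq_eval] using this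
  set R : MvPolynomial ι ℝ := ∑ i, (X i - C (c i) * aeval Bp (Lp i)) ^ 2 with hR
  have hRℓ : aeval ℓ R = 0 := by
    rw [hR, map_sum]
    refine Finset.sum_eq_zero fun i _ => ?_
    rw [map_pow, map_sub, map_mul, aeval_X, hlift, aeval_C, MvPolynomial.algebraMap_eq, sub_self]
    exact zero_pow two_ne_zero
  have hRev : ∀ y, eval y R = ∑ i, (y i - c i * eval (fun j => eval y (Bp j)) (Lp i)) ^ 2 := by
    intro y
    simp only [hR, map_sum, map_pow, map_sub, map_mul, eval_X, eval_C, hevl]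
  -- compactness
  obtain ⟨κ, δ, hδ, hκ⟩ := compact_pen 
    ((isCompact_stdSimplex ℝ ι).prod (isCompact_sphere (0 : Fin t → ℝ) 1))
    (fun z => ∑ i, ∑ j, z.2 i * z.2 j * eval z.1 (aeval Bp (F i j)))
    (fun z => eval z.1 R * ∑ i, z.2 i ^ 2)
    (by
      have := fun p : MvPolynomial ι ℝ => MvPolynomial.continuous_eval p
      refine continuous_finsetSum _ fun i _ => continuous_finsetSum _ fun j _ => ?_
      exact (by fun_prop : Continuous fun z : (ι → ℝ) × (Fin t → ℝ) => z.2 i * z.2 j).mul ((this _).comp continuous_fst))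
    (by
      refine ((MvPolynomial.continuous_eval R).comp continuous_fst).mul ?_
      fun_prop)
    (by
      intro z _
      rw [hRev]
      positivity)
    (by
      rintro ⟨y, v⟩ ⟨hy, hv⟩ hg
      simp only at hg hy hv ⊢
      have hv1 : ‖v‖ = 1 := by simpa using hv
      have hv0 : v ≠ 0 := by
        rintro rfl
        simp at hv1
      have hR0 : eval y R = 0 := by
        rcases mul_eq_zero.1 hg with h | h
        · exact h
        · exfalso
          apply hv0
          ext i
          have := (Finset.sum_eq_zero_iff_of_nonneg (fun i _ => sq_nonneg (v i))).1 h i (Finset.mem_univ i)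
          simpa using this
      rw [hRev] at hR0
      have hyi : ∀ i, y i = c i * eval (fun j => eval y (Bp j)) (Lp i) := by
        intro i
        have := (Finset.sum_eq_zero_iff_of_nonneg (fun i _ => sq_nonneg _)).1 hR0 i (Finset.mem_univ i)
        exact sub_eq_zero.1 (by simpa using this)
      have hPD := hpos (fun j => eval y (Bp j)) (fun i => by
        have h1 := hy.1 i
        rw [hyi i] at h1
        exact nonneg_of_mul_nonneg_right h1 (hc i))
      have := hPD.dotProduct_mulVec_pos hv0
      rw [quad_eq] at this
      simpa only [hevl, Matrix.map_apply] using this)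
  set Q : Fin t → Fin t → MvPolynomial ι ℝ := fun i j => aeval Bp (F i j) + if i = j then C κ * R else 0 with hQ
  have hQℓ : ∀ i j, aeval ℓ (Q i j) = F i j := by
    intro i j
    simp only [hQ, map_add, hlift]
    split_ifs
    · rw [map_mul, hRℓ, mul_zero, add_zero]
    · rw [map_zero, add_zero]
  have hQs : ∀ i j, Q i j = Q j i := by
    intro i j
    have : F i j = F j i := hsymm.apply j i
    simp only [hQ, this, eq_comm]
  have hQpos : ∀ y ∈ stdSimplex ℝ ι, ∀ v : Fin t → ℝ, ‖v‖ = 1 → δ ≤ ∑ i, ∑ j, v i * v j * eval y (Q i j) := by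
    intro y hy v hv
    refine (hκ (y, v) ⟨hy, by simpa using hv⟩).trans_eq ?_
    simp only [hQ, map_add, mul_add, Finset.sum_add_distrib]
    congr 1
    rw [Finset.mul_sum, Finset.mul_sum]
    refine Finset.sum_congr rfl fun i _ => ?_
    rw [Finset.sum_eq_single i]
    · simp; ring
    · intro j _ hj
      simp [Ne.symm hj]
    · simp
  set ε : ℝ := δ / (2 * ((t:ℝ) * t + 1)) with hε
  have hεpos : 0 < ε := by positivity
  choose M0 hM0 using fun q => approx ℓ hℓ q ε hεpos
  refine ⟨∑ i, ∑ j, M0 (Q i j) + 1, fun M hM => ?_⟩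
  have hMpos : 0 < M := by omega
  have hMM : ∀ i j, M0 (Q i j) ≤ M := by
    intro i j
    have h1 : M0 (Q i j) ≤ ∑ j, M0 (Q i j) :=
      Finset.single_le_sum (f := fun j => M0 (Q i j)) (fun _ _ => Nat.zero_le _) (Finset.mem_univ j)
    have h2 : ∑ j, M0 (Q i j) ≤ ∑ i, ∑ j, M0 (Q i j) :=
      Finset.single_le_sum (f := fun i => ∑ j, M0 (Q i j)) (fun _ _ => Nat.zero_le _) (Finset.mem_univ i)
    omega
  have hex : ∀ q, ∃ b : (ι → ℕ) → ℝ, M0 q ≤ M → (aeval ℓ q = ∑ α ∈ Finset.piAntidiag Finset.univ M,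
      ((Nat.multinomial Finset.univ α : ℝ) * b α) • ∏ i, ℓ i ^ α i ∧
    ∀ α ∈ Finset.piAntidiag Finset.univ M, |b α - eval (fun i => (α i : ℝ) / M) q| ≤ ε) := by
    intro q
    by_cases h : M0 q ≤ M
    · obtain ⟨b, hb⟩ := hM0 q M h
      exact ⟨b, fun _ => hb⟩
    · exact ⟨0, fun h' => absurd h' h⟩
  choose β hβ using hex
  refine ⟨fun α => Matrix.of fun i j => ((Nat.multinomial Finset.univ α : ℝ) * ∏ k, c k ^ α k) * β (Q i j) α, ?_, ?_⟩
  · intro α hα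
    have hmem : α ∈ Finset.piAntidiag Finset.univ M := by simp [Finset.mem_piAntidiag, hα]
    apply posDef_of_sphere
    · intro i j
      simp only [Matrix.of_apply, hQs i j]
    · intro v hv
      have hq := hQpos _ (simplex_mem hMpos α hα) v hv
      have hm : 0 < (Nat.multinomial Finset.univ α : ℝ) * ∏ k, c k ^ α k := by
        apply mul_pos
        · exact_mod_cast Nat.multinomial_pos _ _
        · exact Finset.prod_pos fun k _ => pow_pos (hc k) _
      have e : ∑ i, ∑ j, v i * v j * (Matrix.of fun i j => ((Nat.multinomial Finset.univ α : ℝ) * ∏ k, c k ^ α k) * β (Q i j) α) i j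
        = ((Nat.multinomial Finset.univ α : ℝ) * ∏ k, c k ^ α k) * ∑ i, ∑ j, v i * v j * β (Q i j) α := by
        simp only [Matrix.of_apply, Finset.mul_sum]
        refine Finset.sum_congr rfl fun i _ => Finset.sum_congr rfl fun j _ => ?_
        ring
      rw [e]
      apply mul_pos hm
      have hdiff : |∑ i, ∑ j, v i * v j * β (Q i j) α - ∑ i, ∑ j, v i * v j * eval (fun i => (α i : ℝ) / M) (Q i j)| ≤ ∑ i : Fin t, ∑ j : Fin t, ε := by
        simp only [← Finset.sum_sub_distrib, ← mul_sub]
        refine (Finset.abs_sum_le_sum_abs _ _).trans (Finset.sum_le_sum fun i _ => ?_)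
        refine (Finset.abs_sum_le_sum_abs _ _).trans (Finset.sum_le_sum fun j _ => ?_)
        have hvi : ∀ i, |v i| ≤ 1 := fun i => hv ▸ norm_le_pi_norm v i
        rw [abs_mul, abs_mul]
        have := (hβ (Q i j) (hMM i j)).2 α hmem
        calc |v i| * |v j| * _ ≤ 1 * 1 * ε := by gcongr <;> apply hvi
          _ = ε := by ring
      simp only [Finset.sum_const, Finset.card_univ, Fintype.card_fin, nsmul_eq_mul] at hdiff
      have h2 : (t:ℝ) * (t * ε) ≤ δ / 2 := by
        have : ((t:ℝ) * t + 1) * ε = δ / 2 := by rw [hε]; field_simp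
        nlinarith
      have := (abs_le.1 hdiff).1
      linarith
  · ext1 i j
    rw [← hQℓ i j, (hβ (Q i j) (hMM i j)).1, Matrix.sum_apply]
    refine Finset.sum_congr rfl fun α _ => ?_
    simp only [Matrix.smul_apply, Matrix.map_apply, Matrix.of_apply, smul_eq_mul, hℓdef, mul_pow, Finset.prod_mul_distrib, MvPolynomial.smul_eq_C_mul, map_mul, map_prod, map_pow]
    ring


/-- Handelman's Positivstellensatz for matrix polynomials. If
`K = {x : L₁(x) ≥ 0, …, L_m(x) ≥ 0}` is a convex compact polyhedron with non-empty
interior, defined by linear polynomials `Lᵢ`, and the symmetric matrix polynomial `F` of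
degree `d > 0` is positive definite on `K`, then `F = Σ_{|α| ≤ N+d} G_α L₁^{α₁} ⋯ L_m^{α_m}`
with all `G_α` positive definite. -/
theorem handelman_matrix_polynomials (n t m d : ℕ) (hd : 0 < d)
    (Lp : Fin m → MvPolynomial (Fin n) ℝ) (hlin : ∀ i, (Lp i).totalDegree ≤ 1)
    (K : Set (Fin n → ℝ)) (hK : K = {x | ∀ i, 0 ≤ MvPolynomial.eval x (Lp i)})
    (hKconv : Convex ℝ K) (hKcomp : IsCompact K) (hKint : (interior K).Nonempty)
    (F : Matrix (Fin t) (Fin t) (MvPolynomial (Fin n) ℝ)) (hsymm : F.IsSymm)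
    (hdegle : ∀ i j, (F i j).totalDegree ≤ d) (hdeg : ∃ i j, (F i j).totalDegree = d)
    (hpos : ∀ x ∈ K, (F.map (MvPolynomial.eval x)).PosDef) :
    ∃ N : ℕ, 0 < N ∧ ∃ G : (Fin m → ℕ) → Matrix (Fin t) (Fin t) ℝ,
      (∀ α : Fin m → ℕ, (∑ i, α i) ≤ N + d → (G α).PosDef) ∧
      F = ∑ α ∈ (Finset.Iic (fun _ => N + d : Fin m → ℕ)).filter
            (fun α => (∑ i, α i) ≤ N + d),
          (∏ i, (Lp i) ^ (α i)) • (G α).map MvPolynomial.C := by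
  have hn : Nonempty (Fin n) := by
    by_contra hcon
    rw [not_nonempty_iff] at hcon
    obtain ⟨i, j, hij⟩ := hdeg
    rw [MvPolynomial.eq_C_of_isEmpty (F i j), MvPolynomial.totalDegree_C] at hij
    omega
  subst hK
  obtain ⟨x0, hx0⟩ := hKint
  have hnb := mem_interior_iff_mem_nhds.1 hx0
  have : (nhdsWithin x0 {x0}ᶜ).NeBot := Module.punctured_nhds_neBot ℝ (Fin n → ℝ) x0
  obtain ⟨x1, hx1, hne⟩ := (infinite_of_mem_nhds x0 hnb).nontrivial.exists_ne x0
  have hx0' := interior_subset hx0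
  have hiff : ∀ x : Fin n → ℝ, (∀ i, 0 ≤ eval x ((Fin.cons 1 Lp : Fin (m+1) → MvPolynomial (Fin n) ℝ) i)) ↔
      ∀ i, 0 ≤ eval x (Lp i) := by
    intro x
    rw [Fin.forall_fin_succ]
    simp
  obtain ⟨M0, hM0⟩ := core (Fin.cons 1 Lp : Fin (m+1) → MvPolynomial (Fin n) ℝ)
    (by
      intro i
      refine Fin.cases ?_ (fun i => ?_) i
      · simp
      · simpa using hlin i)
    (by simpa only [hiff] using hKcomp.isBounded)
    x0 x1 ((hiff _).2 hx0') ((hiff _).2 hx1) hne.symm F hsymm (fun x hx => hpos x ((hiff x).1 hx))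
  obtain ⟨G, hG, hF⟩ := hM0 (M0 + 1 + d) (by omega)
  refine ⟨M0 + 1, by omega, fun α => G (Fin.cons (M0 + 1 + d - ∑ i, α i) α), ?_, ?_⟩
  · intro α hα
    apply hG
    rw [Fin.sum_univ_succ]
    simp only [Fin.cons_zero, Fin.cons_succ]
    omega
  · rw [hF]
    refine Finset.sum_nbij' (fun α => Fin.tail α) (fun α => Fin.cons (M0 + 1 + d - ∑ i, α i) α) ?_ ?_ ?_ ?_ ?_
    · intro α hα
      have hs := (Finset.mem_piAntidiag.1 hα).1
      rw [Fin.sum_univ_succ] at hs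
      have hle : ∑ i, Fin.tail α i ≤ M0 + 1 + d := by
        simp only [Fin.tail]; omega
      rw [Finset.mem_filter, Finset.mem_Iic]
      refine ⟨fun i => ?_, hle⟩
      exact (Finset.single_le_sum (f := Fin.tail α) (fun _ _ => Nat.zero_le _) (Finset.mem_univ i)).trans hle
    · intro α hα
      have hle := (Finset.mem_filter.1 hα).2
      simp only [Finset.mem_piAntidiag, Finset.mem_univ, implies_true, and_true]
      rw [Fin.sum_univ_succ]
      simp only [Fin.cons_zero, Fin.cons_succ]
      omega
    · intro α hα
      have hs := (Finset.mem_piAntidiag.1 hα).1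
      rw [Fin.sum_univ_succ] at hs
      have : M0 + 1 + d - ∑ i, Fin.tail α i = α 0 := by
        simp only [Fin.tail]; omega
      rw [this, Fin.cons_self_tail]
    · intro α _
      simp
    · intro α hα
      have hs := (Finset.mem_piAntidiag.1 hα).1
      rw [Fin.sum_univ_succ] at hs
      have : M0 + 1 + d - ∑ i, Fin.tail α i = α 0 := by
        simp only [Fin.tail]; omega
      simp only
      rw [this, Fin.cons_self_tail, Fin.prod_univ_succ]
      simp [Fin.tail]
end

section
/- Let F ∈ S_t(ℝ[X₁,…,Xₙ]) be a symmetric matrix polynomial of degree d > 0 such that F(x) is positive definite for all x ∈ [-1,1]ⁿ. Then there exist a positive integer N and positive definite matrices G_α ∈ M_t(ℝ), for α ∈ ℕ₀^{2n} with |α| = 0, …, N+d, such that F(X) = Σ_{|α|=0}^{N+d} G_α (1+X₁)^{α₁} (1-X₁)^{α₂} ⋯ (1+Xₙ)^{α_{2n-1}} (1-Xₙ)^{α_{2n}}. -/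
open Finset

theorem prod_diff {ι : Type*} (s : Finset ι) (x y : ι → ℝ) (hx : ∀ i ∈ s, |x i| ≤ 1)
    (hy : ∀ i ∈ s, |y i| ≤ 1) : |∏ i ∈ s, x i - ∏ i ∈ s, y i| ≤ ∑ i ∈ s, |x i - y i| := by
  classical
  induction s using Finset.induction_on with
  | empty => simp
  | insert a s ha ih =>
    rw [prod_insert ha, prod_insert ha, sum_insert ha]
    have h1 := ih (fun i hi => hx i (mem_insert_of_mem hi)) (fun i hi => hy i (mem_insert_of_mem hi))
    have hY : |∏ i ∈ s, y i| ≤ 1 := by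
      rw [abs_prod]
      exact prod_le_one (fun _ _ => abs_nonneg _) (fun i hi => hy i (mem_insert_of_mem hi))
    have hX := hx a (mem_insert_self _ _)
    calc |x a * ∏ i ∈ s, x i - y a * ∏ i ∈ s, y i|
        = |x a * (∏ i ∈ s, x i - ∏ i ∈ s, y i) + (x a - y a) * ∏ i ∈ s, y i| := by ring_nf
      _ ≤ |x a| * |∏ i ∈ s, x i - ∏ i ∈ s, y i| + |x a - y a| * |∏ i ∈ s, y i| := by
        rw [← abs_mul, ← abs_mul]; exact abs_add_le _ _
      _ ≤ 1 * ∑ i ∈ s, |x i - y i| + |x a - y a| * 1 := by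
        gcongr
      _ = _ := by ring

theorem fac_diff (i j a m : ℕ) (hi : i < j) (hj : j < m) (ha : a ≤ m) :
    |((a - i : ℕ) : ℝ) / ((m - i : ℕ) : ℝ) - (a : ℝ) / m| ≤ (j : ℝ) / ((m : ℝ) - j) := by
  have hm : (0:ℝ) < m := by exact_mod_cast (by omega : 0 < m)
  have hmj : (0:ℝ) < (m:ℝ) - j := by
    have : (j:ℝ) < m := by exact_mod_cast hj
    linarith
  have hij : (i:ℝ) < j := by exact_mod_cast hi
  have ham : (a:ℝ) ≤ m := by exact_mod_cast ha
  have ha0 : (0:ℝ) ≤ a := by positivity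
  have hi0 : (0:ℝ) ≤ i := by positivity
  rcases le_total i a with h | h
  · rw [Nat.cast_sub h, Nat.cast_sub (by omega)]
    have hmi : (0:ℝ) < (m:ℝ) - i := by linarith
    have e : ((a:ℝ) - i) / ((m:ℝ) - i) - (a : ℝ) / m = - ((i / ((m:ℝ) - i)) * (((m:ℝ) - a) / m)) := by
      field_simp; ring
    rw [e, abs_neg, abs_of_nonneg (mul_nonneg (div_nonneg hi0 hmi.le) (div_nonneg (by linarith) hm.le))]
    calc (i / ((m:ℝ) - i)) * (((m:ℝ) - a) / m) ≤ (i / ((m:ℝ) - i)) * 1 := by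
          gcongr
          rw [div_le_one hm]; linarith
      _ ≤ (j : ℝ) / ((m : ℝ) - j) := by
          rw [mul_one]; gcongr
  · have : a - i = 0 := by omega
    rw [this]
    simp only [Nat.cast_zero, zero_div, zero_sub, abs_neg]
    rw [abs_of_nonneg (by positivity)]
    have : (a:ℝ) ≤ i := by exact_mod_cast h
    gcongr
    · linarith
    · linarith

theorem choose_diff (j a m : ℕ) (hj : j < m) (ha : a ≤ m) :
    |((a.choose j : ℝ)) / (m.choose j : ℝ) - ((a : ℝ) / m) ^ j| ≤ j * ((j : ℝ) / ((m : ℝ) - j)) := by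
  have e : ((a.choose j : ℝ)) / (m.choose j : ℝ)
      = ∏ i ∈ range j, ((a - i : ℕ) : ℝ) / ((m - i : ℕ) : ℝ) := by
    rw [prod_div_distrib, ← Nat.cast_prod, ← Nat.cast_prod, ← Nat.descFactorial_eq_prod_range,
      ← Nat.descFactorial_eq_prod_range, Nat.descFactorial_eq_factorial_mul_choose,
      Nat.descFactorial_eq_factorial_mul_choose]
    push_cast
    rw [mul_div_mul_left]
    positivity
  have e2 : ((a : ℝ) / m) ^ j = ∏ i ∈ range j, ((a : ℝ) / m) := by rw [prod_const, card_range]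
  rw [e, e2]
  refine (prod_diff _ _ _ ?_ ?_).trans ?_
  · intro i hi
    rw [abs_of_nonneg (by positivity)]
    apply div_le_one_of_le₀ _ (by positivity)
    exact_mod_cast (by omega)
  · intro i hi
    rw [abs_of_nonneg (by positivity)]
    apply div_le_one_of_le₀ _ (by positivity)
    exact_mod_cast ha
  · refine (sum_le_card_nsmul _ _ ((j : ℝ) / ((m : ℝ) - j)) ?_).trans ?_
    · intro i hi
      exact fac_diff i j a m (by simpa using hi) hj ha
    · simp

theorem bern1 {R : Type*} [CommRing R] [Algebra ℝ R] (u v : R) (huv : u + v = 1) (j m : ℕ) (hj : j ≤ m) :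
    u ^ j = ∑ a ∈ range (m + 1),
      algebraMap ℝ R ((a.choose j : ℝ) / (m.choose j : ℝ)) * ((m.choose a : ℕ) * u ^ a * v ^ (m - a)) := by
  obtain ⟨p, rfl⟩ := Nat.exists_eq_add_of_le hj
  rw [show j + p + 1 = j + (p + 1) by ring, sum_range_add]
  rw [sum_eq_zero, zero_add]
  · have h1 : u ^ j = u ^ j * (u + v) ^ p := by rw [huv]; simp
    rw [h1, add_pow, mul_sum]
    refine sum_congr rfl fun x hx => ?_
    have hx : x ≤ p := by simpa [Nat.lt_succ_iff] using hx
    have e1 : j + p - (j + x) = p - x := by omega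
    have hne : ((j + p).choose j : ℝ) ≠ 0 := by
      exact_mod_cast (Nat.choose_pos (by omega)).ne'
    have key : ((j + x).choose j : ℝ) / ((j + p).choose j : ℝ) * ((j + p).choose (j + x) : ℝ) = p.choose x := by
      have := Nat.choose_mul (n := j + p) (k := j + x) (s := j) (by omega)
      rw [Nat.add_sub_cancel_left, Nat.add_sub_cancel_left] at this
      field_simp
      exact_mod_cast (by linarith)
    have key2 := congrArg (algebraMap ℝ R) key
    rw [map_mul, map_natCast, map_natCast] at key2
    rw [e1, ← key2]
    ring
  · intro a ha
    rw [Nat.choose_eq_zero_of_lt (by simpa using ha)]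
    simp

noncomputable def bw (n m : ℕ) (a : Fin n → ℕ) : MvPolynomial (Fin n) ℝ :=
  ∏ k, (((m.choose (a k) : ℕ) : MvPolynomial (Fin n) ℝ) * (MvPolynomial.C (1/2) * (1 + MvPolynomial.X k)) ^ (a k) *
    (MvPolynomial.C (1/2) * (1 - MvPolynomial.X k)) ^ (m - a k))

def BApp (n : ℕ) (f : MvPolynomial (Fin n) ℝ) : Prop :=
  ∀ ε : ℝ, 0 < ε → ∃ m0 : ℕ, ∀ m ≥ m0, ∃ b : (Fin n → ℕ) → ℝ,
    f = ∑ a ∈ Fintype.piFinset (fun _ : Fin n => range (m + 1)), MvPolynomial.C (b a) * bw n m a ∧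
    ∀ a ∈ Fintype.piFinset (fun _ : Fin n => range (m + 1)),
      |b a - MvPolynomial.eval (fun k => 2 * ((a k : ℝ) / m) - 1) f| ≤ ε

theorem BApp.add {n : ℕ} {f g : MvPolynomial (Fin n) ℝ} (hf : BApp n f) (hg : BApp n g) :
    BApp n (f + g) := by
  intro ε hε
  obtain ⟨m1, h1⟩ := hf (ε/2) (by linarith)
  obtain ⟨m2, h2⟩ := hg (ε/2) (by linarith)
  refine ⟨max m1 m2, fun m hm => ?_⟩
  obtain ⟨b1, e1, k1⟩ := h1 m ((le_max_left _ _).trans hm)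
  obtain ⟨b2, e2, k2⟩ := h2 m ((le_max_right _ _).trans hm)
  refine ⟨fun a => b1 a + b2 a, ?_, fun a ha => ?_⟩
  · conv_lhs => rw [e1, e2]
    rw [← sum_add_distrib]
    refine sum_congr rfl fun a _ => ?_
    rw [map_add, add_mul]
  · have := k1 a ha
    have := k2 a ha
    rw [map_add]
    rw [abs_le] at *
    constructor <;> linarith

theorem BApp.smul {n : ℕ} {f : MvPolynomial (Fin n) ℝ} (hf : BApp n f) (c : ℝ) :
    BApp n (MvPolynomial.C c * f) := by
  intro ε hε
  have hc : 0 < |c| + 1 := by positivity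
  obtain ⟨m1, h1⟩ := hf (ε/(|c| + 1)) (by positivity)
  refine ⟨m1, fun m hm => ?_⟩
  obtain ⟨b1, e1, k1⟩ := h1 m hm
  refine ⟨fun a => c * b1 a, ?_, fun a ha => ?_⟩
  · conv_lhs => rw [e1]
    rw [mul_sum]
    refine sum_congr rfl fun a _ => ?_
    rw [map_mul, mul_assoc]
  · have := k1 a ha
    rw [map_mul, MvPolynomial.eval_C, ← mul_sub, abs_mul]
    calc |c| * _ ≤ |c| * (ε/(|c| + 1)) := by gcongr
      _ ≤ (|c| + 1) * (ε/(|c| + 1)) := by gcongr; linarith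
      _ = ε := by field_simp

theorem tend_aux (j : ℕ) : Filter.Tendsto (fun m : ℕ => (j : ℝ) * ((j : ℝ) / ((m : ℝ) - j)))
    Filter.atTop (nhds 0) := by
  have h : Filter.Tendsto (fun m : ℕ => (m : ℝ) - j) Filter.atTop Filter.atTop :=
    Filter.tendsto_atTop_add_const_right _ _ tendsto_natCast_atTop_atTop
  simpa using (h.const_div_atTop (j : ℝ)).const_mul (j : ℝ)

theorem BApp.mono {n : ℕ} (γ : Fin n → ℕ) :
    BApp n (∏ k, (MvPolynomial.C (1/2) * (1 + MvPolynomial.X k)) ^ (γ k)) := by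
  intro ε hε
  have ht : Filter.Tendsto (fun m : ℕ => ∑ k, (γ k : ℝ) * ((γ k : ℝ) / ((m : ℝ) - γ k)))
      Filter.atTop (nhds 0) := by
    simpa using tendsto_finsetSum univ (fun k _ => tend_aux (γ k))
  have h1 := ht.eventually (eventually_le_nhds hε)
  have h2 : ∀ᶠ m : ℕ in Filter.atTop, ∀ k, γ k < m :=
    Filter.eventually_all.2 fun k => Filter.eventually_gt_atTop _
  obtain ⟨m0, hm0⟩ := Filter.eventually_atTop.1 (h1.and h2)
  refine ⟨m0, fun m hm => ?_⟩
  obtain ⟨h1, h2⟩ := hm0 m hm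
  refine ⟨fun a => ∏ k, (((a k).choose (γ k) : ℝ) / (m.choose (γ k) : ℝ)), ?_, fun a ha => ?_⟩
  · have hu : ∀ k : Fin n, (MvPolynomial.C (1/2) * (1 + MvPolynomial.X k) : MvPolynomial (Fin n) ℝ)
        + (MvPolynomial.C (1/2) * (1 - MvPolynomial.X k)) = 1 := by
      intro k
      have : (MvPolynomial.C (1/2) : MvPolynomial (Fin n) ℝ) + MvPolynomial.C (1/2) = 1 := by
        rw [← map_add]; norm_num
      linear_combination this
    have e : ∀ k : Fin n, _ := fun k => bern1 _ _ (hu k) (γ k) m (h2 k).le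
    rw [prod_congr rfl (fun k _ => e k), prod_univ_sum]
    refine sum_congr rfl fun a _ => ?_
    rw [prod_mul_distrib, bw, map_prod]
    rfl
  · have ha' : ∀ k, a k ≤ m := fun k => by
      have := Fintype.mem_piFinset.1 ha k
      simpa [Nat.lt_succ_iff] using this
    have e : MvPolynomial.eval (fun k => 2 * ((a k : ℝ) / m) - 1)
        (∏ k, (MvPolynomial.C (1/2) * (1 + MvPolynomial.X k)) ^ (γ k))
        = ∏ k, ((a k : ℝ) / m) ^ (γ k) := by
      rw [map_prod]
      refine prod_congr rfl fun k _ => ?_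
      simp only [map_pow, map_mul, map_add, map_one, MvPolynomial.eval_C, MvPolynomial.eval_X]
      congr 1
      ring
    rw [e]
    refine (prod_diff _ _ _ ?_ ?_).trans ((sum_le_sum fun k _ => choose_diff (γ k) (a k) m (h2 k) (ha' k)).trans h1)
    · intro k _
      rw [abs_of_nonneg (by positivity)]
      apply div_le_one_of_le₀ _ (by positivity)
      exact_mod_cast Nat.choose_le_choose _ (ha' k)
    · intro k _
      rw [abs_of_nonneg (by positivity)]
      apply pow_le_one₀ (by positivity)
      apply div_le_one_of_le₀ _ (by positivity)
      exact_mod_cast ha' k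

theorem bApp_all {n : ℕ} (f : MvPolynomial (Fin n) ℝ) : BApp n f := by
  have key : ∀ g : MvPolynomial (Fin n) ℝ, BApp n (MvPolynomial.aeval
      (fun k => (MvPolynomial.C (1/2) * (1 + MvPolynomial.X k) : MvPolynomial (Fin n) ℝ)) g) := by
    intro g
    induction g using MvPolynomial.induction_on' with
    | monomial u c =>
      rw [MvPolynomial.aeval_monomial, Finsupp.prod_fintype _ _ (by simp)]
      exact (BApp.mono (fun k => u k)).smul c
    | add p q hp hq =>
      rw [map_add]; exact hp.add hq
  have h := key (MvPolynomial.aeval (fun k => (MvPolynomial.C 2 * MvPolynomial.X k - 1 : MvPolynomial (Fin n) ℝ)) f)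
  have e : (MvPolynomial.aeval
      (fun k => (MvPolynomial.C (1/2) * (1 + MvPolynomial.X k) : MvPolynomial (Fin n) ℝ))).comp
      (MvPolynomial.aeval (fun k => (MvPolynomial.C 2 * MvPolynomial.X k - 1 : MvPolynomial (Fin n) ℝ)))
      = AlgHom.id ℝ _ := by
    ext1 k
    have : (MvPolynomial.C 2 : MvPolynomial (Fin n) ℝ) * MvPolynomial.C (1/2) = 1 := by
      rw [← map_mul]; norm_num
    simp only [AlgHom.comp_apply, MvPolynomial.aeval_X, map_sub, map_mul, map_one, AlgHom.id_apply,
      MvPolynomial.aeval_C, MvPolynomial.algebraMap_eq]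
    linear_combination (1 + MvPolynomial.X k) * this
  have e2 := DFunLike.congr_fun e f
  rw [AlgHom.comp_apply, AlgHom.id_apply] at e2
  rwa [e2] at h

/-- the generator monomials -/
noncomputable def pw (n : ℕ) (α : Fin n → ℕ × ℕ) : MvPolynomial (Fin n) ℝ :=
  ∏ k, (1 + MvPolynomial.X k) ^ (α k).1 * (1 - MvPolynomial.X k) ^ (α k).2

theorem bw_eq (n m : ℕ) (a : Fin n → ℕ) :
    ∃ κ : ℝ, 0 ≤ κ ∧ bw n m a = MvPolynomial.C κ * pw n (fun k => (a k, m - a k)) := by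
  refine ⟨∏ k, (((m.choose (a k) : ℕ) : ℝ) * (1/2) ^ (a k) * (1/2) ^ (m - a k)), by positivity, ?_⟩
  rw [bw, pw, map_prod, ← prod_mul_distrib]
  refine prod_congr rfl fun k _ => ?_
  simp only [map_mul, map_pow, map_natCast, mul_pow]
  ring

abbrev idx (n M : ℕ) : Finset (Fin n → ℕ × ℕ) :=
  (Finset.Iic (fun _ => (M, M) : Fin n → ℕ × ℕ)).filter
            (fun α => (∑ k, ((α k).1 + (α k).2)) ≤ M)

theorem mem_idx (n M : ℕ) (α : Fin n → ℕ × ℕ) : α ∈ idx n M ↔ (∑ k, ((α k).1 + (α k).2)) ≤ M := by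
  rw [idx, mem_filter, and_iff_right_iff_imp, mem_Iic]
  intro h k
  have := single_le_sum (f := fun k => (α k).1 + (α k).2) (fun _ _ => Nat.zero_le _) (mem_univ k)
  exact ⟨by show (α k).1 ≤ M; omega, by show (α k).2 ≤ M; omega⟩

def toSum {n : ℕ} (α : Fin n → ℕ × ℕ) : Fin n ⊕ Fin n → ℕ :=
  Sum.elim (fun k => (α k).1) (fun k => (α k).2)

theorem one_rep (n M : ℕ) (hn : 0 < n) : ∃ c : (Fin n → ℕ × ℕ) → ℝ, (∀ α, 0 < c α) ∧
    (1 : MvPolynomial (Fin n) ℝ) = ∑ α ∈ idx n M, MvPolynomial.C (c α) * pw n α := by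
  have hn' : (0:ℝ) < n := by exact_mod_cast hn
  let Y : Fin n ⊕ Fin n → MvPolynomial (Fin n) ℝ :=
    Sum.elim (fun k => 1 + MvPolynomial.X k) (fun k => 1 - MvPolynomial.X k)
  have hY : ∑ e, Y e = MvPolynomial.C (2 * n : ℝ) := by
    rw [Fintype.sum_sum_type, ← sum_add_distrib]
    simp only [Y, Sum.elim_inl, Sum.elim_inr, add_add_sub_cancel, sum_const, card_univ, Fintype.card_fin]
    rw [map_mul, map_natCast, nsmul_eq_mul, map_ofNat]
    ring
  have hj : ∀ j ∈ range (M + 1), (∑ α ∈ idx n M with (∑ k, ((α k).1 + (α k).2)) = j,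
      MvPolynomial.C (((M:ℝ) + 1)⁻¹ * ((2 * n : ℝ)⁻¹) ^ (∑ k, ((α k).1 + (α k).2)) *
        (Nat.multinomial univ (toSum α) : ℕ)) * pw n α) = MvPolynomial.C ((M:ℝ) + 1)⁻¹ := by
    intro j hj
    have hjM : j ≤ M := by simpa [Nat.lt_succ_iff] using hj
    have h1 : (MvPolynomial.C ((M:ℝ) + 1)⁻¹ : MvPolynomial (Fin n) ℝ)
      = MvPolynomial.C (((M:ℝ) + 1)⁻¹ * ((2 * n : ℝ)⁻¹) ^ j) * (∑ e, Y e) ^ j := by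
      rw [hY, ← map_pow, ← map_mul, mul_assoc, ← mul_pow, inv_mul_cancel₀ (by positivity)]
      simp
    rw [h1, sum_pow_eq_sum_piAntidiag, mul_sum]
    refine sum_bij' (fun α _ => toSum α) (fun β _ => fun k => (β (Sum.inl k), β (Sum.inr k))) ?_ ?_ ?_ ?_ ?_
    · intro α hα
      rw [mem_filter] at hα
      rw [mem_piAntidiag]
      refine ⟨?_, by simp⟩
      rw [← hα.2, Fintype.sum_sum_type, sum_add_distrib]
      rfl
    · intro β hβ
      rw [mem_piAntidiag, Fintype.sum_sum_type, ← sum_add_distrib] at hβ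
      rw [mem_filter, mem_idx]
      simp only
      omega
    · intro α _
      rfl
    · intro β _
      funext e
      cases e <;> rfl
    · intro α hα
      rw [mem_filter] at hα
      rw [hα.2, Fintype.prod_sum_type, ← prod_mul_distrib, map_mul, map_natCast, mul_assoc]
      rfl
  refine ⟨fun α => ((M:ℝ) + 1)⁻¹ * ((2 * n : ℝ)⁻¹) ^ (∑ k, ((α k).1 + (α k).2)) *
        (Nat.multinomial univ (toSum α) : ℕ), fun α => ?_, ?_⟩
  rotate_left
  · rw [← sum_fiberwise_of_maps_to (s := idx n M) (t := range (M + 1))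
      (g := fun α => (∑ k, ((α k).1 + (α k).2))), sum_congr rfl hj]
    · rw [sum_const, card_range, nsmul_eq_mul, ← map_natCast (MvPolynomial.C : ℝ →+* _), ← map_mul]
      push_cast
      rw [mul_inv_cancel₀ (by positivity), map_one]
    · intro α hα
      rw [mem_idx] at hα
      rw [mem_range]; omega
  · have := Nat.multinomial_pos univ (toSum α)
    positivity

theorem compact_bound {n t : ℕ} (F : Matrix (Fin t) (Fin t) (MvPolynomial (Fin n) ℝ))
    (hpos : ∀ x : Fin n → ℝ, (∀ k, x k ∈ Set.Icc (-1 : ℝ) 1) →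
      (F.map (MvPolynomial.eval x)).PosDef) :
    ∃ c : ℝ, 0 < c ∧ ∀ x : Fin n → ℝ, (∀ k, x k ∈ Set.Icc (-1 : ℝ) 1) → ∀ v : Fin t → ℝ,
      c * ‖v‖ ^ 2 ≤ ∑ i, ∑ j, v i * MvPolynomial.eval x (F i j) * v j := by
  have hq : ∀ x (v : Fin t → ℝ), star v ⬝ᵥ (F.map (MvPolynomial.eval x)).mulVec v
      = ∑ i, ∑ j, v i * MvPolynomial.eval x (F i j) * v j := by
    intro x v
    simp [dotProduct, Matrix.mulVec, mul_sum, mul_assoc]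
  have hK : IsCompact ((Set.pi Set.univ fun _ : Fin n => Set.Icc (-1:ℝ) 1) ×ˢ
      (Metric.sphere (0 : Fin t → ℝ) 1)) :=
    (isCompact_univ_pi fun _ => isCompact_Icc).prod (isCompact_sphere _ _)
  have hcont : Continuous (fun p : (Fin n → ℝ) × (Fin t → ℝ) =>
      ∑ i, ∑ j, p.2 i * MvPolynomial.eval p.1 (F i j) * p.2 j) := by
    refine continuous_finsetSum _ fun i _ => continuous_finsetSum _ fun j _ => ?_
    have := (MvPolynomial.continuous_eval (F i j)).comp (continuous_fst (X := Fin n → ℝ) (Y := Fin t → ℝ))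
    exact (((continuous_apply i).comp continuous_snd).mul this).mul ((continuous_apply j).comp continuous_snd)
  obtain ⟨c, hc, h⟩ := hK.exists_forall_le' hcont.continuousOn (a := 0) (by
    rintro ⟨x, v⟩ ⟨hx, hv⟩
    have hx' : ∀ k, x k ∈ Set.Icc (-1 : ℝ) 1 := fun k => hx k (Set.mem_univ k)
    have hv' : v ≠ 0 := by
      rintro rfl
      simp at hv
    have := (hpos x hx').dotProduct_mulVec_pos hv'
    rwa [hq] at this)
  refine ⟨c, hc, fun x hx v => ?_⟩
  by_cases hv : v = 0
  · subst hv; simp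
  have hv' : 0 < ‖v‖ := norm_pos_iff.2 hv
  have := h (x, ‖v‖⁻¹ • v) ⟨fun k _ => hx k, by simp [norm_smul, hv'.ne']⟩
  have e : ∑ i, ∑ j, (‖v‖⁻¹ • v) i * MvPolynomial.eval x (F i j) * (‖v‖⁻¹ • v) j
      = (‖v‖⁻¹) ^ 2 * ∑ i, ∑ j, v i * MvPolynomial.eval x (F i j) * v j := by
    simp only [mul_sum, Pi.smul_apply, smul_eq_mul]
    refine sum_congr rfl fun i _ => sum_congr rfl fun j _ => ?_
    ring
  simp only at this
  rw [e, inv_pow, ← div_eq_inv_mul, le_div_iff₀ (by positivity)] at this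
  exact this

theorem posDef_on_hypercube_rep (n t d : ℕ) (hd : 0 < d)
    (F : Matrix (Fin t) (Fin t) (MvPolynomial (Fin n) ℝ)) (hsymm : F.IsSymm)
    (hdegle : ∀ i j, (F i j).totalDegree ≤ d) (hdeg : ∃ i j, (F i j).totalDegree = d)
    (hpos : ∀ x : Fin n → ℝ, (∀ k, x k ∈ Set.Icc (-1 : ℝ) 1) →
      (F.map (MvPolynomial.eval x)).PosDef) :
    ∃ N : ℕ, 0 < N ∧ ∃ G : (Fin n → ℕ × ℕ) → Matrix (Fin t) (Fin t) ℝ,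
      (∀ α : Fin n → ℕ × ℕ, (∑ k, ((α k).1 + (α k).2)) ≤ N + d → (G α).PosDef) ∧
      F = ∑ α ∈ (Finset.Iic (fun _ => (N + d, N + d) : Fin n → ℕ × ℕ)).filter
            (fun α => (∑ k, ((α k).1 + (α k).2)) ≤ N + d),
          ((∏ k, (1 + MvPolynomial.X k) ^ (α k).1 * (1 - MvPolynomial.X k) ^ (α k).2 : MvPolynomial (Fin n) ℝ)) •
            (G α).map MvPolynomial.C := by
  have hn : 0 < n := by
    rcases Nat.eq_zero_or_pos n with rfl | h
    · obtain ⟨i, j, h⟩ := hdeg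
      rw [MvPolynomial.eq_C_of_isEmpty (F i j), MvPolynomial.totalDegree_C] at h
      omega
    · exact h
  obtain ⟨c, hc, hcb⟩ := compact_bound F hpos
  -- constants
  obtain ⟨δ, hδ, hδt⟩ : ∃ δ : ℝ, 0 < δ ∧ δ * t ≤ c / 2 := by
    refine ⟨c / 2 / (t + 1), by positivity, ?_⟩
    rw [div_mul_eq_mul_div, div_le_iff₀ (by positivity)]
    nlinarith
  obtain ⟨ε, hε, hεt⟩ : ∃ ε : ℝ, 0 < ε ∧ ε * (t * t) ≤ c / 2 := by
    refine ⟨c / 2 / (t * t + 1), by positivity, ?_⟩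
    rw [div_mul_eq_mul_div, div_le_iff₀ (by positivity)]
    nlinarith
  let F' : Matrix (Fin t) (Fin t) (MvPolynomial (Fin n) ℝ) := fun i j =>
    F i j - MvPolynomial.C (if i = j then δ else 0)
  have hF'symm : ∀ i j, F' i j = F' j i := by
    intro i j
    simp only [F', hsymm.apply i j, eq_comm]
  have hex : ∃ m0 : ℕ, ∀ m ≥ m0, ∀ i j, ∃ b : (Fin n → ℕ) → ℝ,
      F' i j = ∑ a ∈ Fintype.piFinset (fun _ : Fin n => range (m + 1)), MvPolynomial.C (b a) * bw n m a ∧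
      ∀ a ∈ Fintype.piFinset (fun _ : Fin n => range (m + 1)),
        |b a - MvPolynomial.eval (fun k => 2 * ((a k : ℝ) / m) - 1) (F' i j)| ≤ ε := by
    have : ∀ᶠ m : ℕ in Filter.atTop, ∀ i j, ∃ b : (Fin n → ℕ) → ℝ,
      F' i j = ∑ a ∈ Fintype.piFinset (fun _ : Fin n => range (m + 1)), MvPolynomial.C (b a) * bw n m a ∧
      ∀ a ∈ Fintype.piFinset (fun _ : Fin n => range (m + 1)),
        |b a - MvPolynomial.eval (fun k => 2 * ((a k : ℝ) / m) - 1) (F' i j)| ≤ ε :=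
      Filter.eventually_all.2 fun i => Filter.eventually_all.2 fun j =>
        Filter.eventually_atTop.2 (bApp_all (F' i j) ε hε)
    exact Filter.eventually_atTop.1 this
  obtain ⟨m0, hm0⟩ := hex
  obtain ⟨m, hm1, hm2⟩ : ∃ m, m0 ≤ m ∧ d + 1 ≤ m := ⟨max m0 (d + 1), le_max_left _ _, le_max_right _ _⟩
  have hm := hm0 m hm1
  -- choose the coefficients as a function of the polynomial, for symmetry
  have hch : ∃ b : MvPolynomial (Fin n) ℝ → (Fin n → ℕ) → ℝ, ∀ i j,
      F' i j = ∑ a ∈ Fintype.piFinset (fun _ : Fin n => range (m + 1)),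
        MvPolynomial.C (b (F' i j) a) * bw n m a ∧
      ∀ a ∈ Fintype.piFinset (fun _ : Fin n => range (m + 1)),
        |b (F' i j) a - MvPolynomial.eval (fun k => 2 * ((a k : ℝ) / m) - 1) (F' i j)| ≤ ε := by
    have : ∀ f : MvPolynomial (Fin n) ℝ, ∃ b : (Fin n → ℕ) → ℝ, (∃ i j, f = F' i j) →
      f = ∑ a ∈ Fintype.piFinset (fun _ : Fin n => range (m + 1)), MvPolynomial.C (b a) * bw n m a ∧
      ∀ a ∈ Fintype.piFinset (fun _ : Fin n => range (m + 1)),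
        |b a - MvPolynomial.eval (fun k => 2 * ((a k : ℝ) / m) - 1) f| ≤ ε := by
      intro f
      by_cases h : ∃ i j, f = F' i j
      · obtain ⟨i, j, rfl⟩ := h
        obtain ⟨b, hb⟩ := hm i j
        exact ⟨b, fun _ => hb⟩
      · exact ⟨0, fun h' => absurd h' h⟩
    choose b hb using this
    exact ⟨b, fun i j => hb _ ⟨i, j, rfl⟩⟩
  obtain ⟨b, hb⟩ := hch
  let B : (Fin n → ℕ) → Matrix (Fin t) (Fin t) ℝ := fun a =>
    Matrix.of fun i j => b (F' i j) a
  have hBpsd : ∀ a ∈ Fintype.piFinset (fun _ : Fin n => range (m + 1)), (B a).PosSemidef := by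
    intro a ha
    have hmpos : (0:ℝ) < m := by exact_mod_cast (by omega : 0 < m)
    refine Matrix.PosSemidef.of_dotProduct_mulVec_nonneg ?_ ?_
    · ext i j
      simp only [Matrix.conjTranspose_apply, star_trivial, B, Matrix.of_apply, hF'symm i j]
    · intro v
      set x : Fin n → ℝ := fun k => 2 * ((a k : ℝ) / m) - 1 with hx
      have hxm : ∀ k, x k ∈ Set.Icc (-1 : ℝ) 1 := by
        intro k
        have h1 : a k ≤ m := by
          have := Fintype.mem_piFinset.1 ha k
          simpa [Nat.lt_succ_iff] using this
        have h2 : (a k : ℝ) / m ≤ 1 := by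
          apply div_le_one_of_le₀ _ hmpos.le
          exact_mod_cast h1
        have h3 : 0 ≤ (a k : ℝ) / m := by positivity
        simp only [hx]
        constructor <;> linarith
      have h0 := hcb x hxm v
      have hvn : ∀ i, |v i| ≤ ‖v‖ := fun i => norm_le_pi_norm v i
      have e : star v ⬝ᵥ (B a).mulVec v = (∑ i, ∑ j, v i * MvPolynomial.eval x (F i j) * v j)
          - (∑ i, ∑ j, v i * (if i = j then δ else 0) * v j)
          + ∑ i, ∑ j, v i * (B a i j - MvPolynomial.eval x (F' i j)) * v j := by
        simp only [dotProduct, Matrix.mulVec, mul_sum, ← sum_sub_distrib, ← sum_add_distrib, star_trivial]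
        refine sum_congr rfl fun i _ => sum_congr rfl fun j _ => ?_
        simp only [F', map_sub, MvPolynomial.eval_C]
        ring
      have e1 : (∑ i, ∑ j, v i * (if i = j then δ else 0) * v j) ≤ δ * t * ‖v‖ ^ 2 := by
        have : ∀ i ∈ (univ : Finset (Fin t)), (∑ j, v i * (if i = j then δ else 0) * v j) ≤ δ * ‖v‖ ^ 2 := by
          intro i _
          simp only [mul_ite, mul_zero, ite_mul, zero_mul, sum_ite_eq, mem_univ, if_true]
          have : v i ^ 2 ≤ ‖v‖ ^ 2 := by
            rw [← sq_abs (v i)]; gcongr; exact hvn i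
          nlinarith
        refine (sum_le_card_nsmul _ _ _ this).trans ?_
        rw [card_univ, Fintype.card_fin, nsmul_eq_mul]
        linarith
      have e2 : |∑ i, ∑ j, v i * (B a i j - MvPolynomial.eval x (F' i j)) * v j| ≤ ε * (t * t) * ‖v‖ ^ 2 := by
        have : ∀ i ∈ (univ : Finset (Fin t)), |∑ j, v i * (B a i j - MvPolynomial.eval x (F' i j)) * v j|
            ≤ t * (ε * ‖v‖ ^ 2) := by
          intro i _
          refine (abs_sum_le_sum_abs _ _).trans ((sum_le_card_nsmul _ _ (ε * ‖v‖ ^ 2) ?_).trans ?_)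
          · intro j _
            rw [abs_mul, abs_mul]
            calc |v i| * |B a i j - MvPolynomial.eval x (F' i j)| * |v j| ≤ ‖v‖ * ε * ‖v‖ := by
                  gcongr
                  · exact hvn i
                  · exact (hb i j).2 a ha
                  · exact hvn j
              _ = _ := by ring
          · rw [card_univ, Fintype.card_fin, nsmul_eq_mul]
        refine (abs_sum_le_sum_abs _ _).trans ((sum_le_card_nsmul _ _ _ this).trans ?_)
        rw [card_univ, Fintype.card_fin, nsmul_eq_mul]
        linarith
      have hsq : 0 ≤ ‖v‖ ^ 2 := by positivity
      have e3 := mul_le_mul_of_nonneg_right hδt hsq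
      have e4 := mul_le_mul_of_nonneg_right hεt hsq
      rw [e]
      have := (abs_le.1 e2).1
      linarith
  choose κ hκ0 hκ using bw_eq n m
  have hM : m ≤ n * m := Nat.le_mul_of_pos_left m hn
  obtain ⟨N, hN⟩ : ∃ N, N + d = n * m := ⟨n * m - d, by omega⟩
  obtain ⟨cc, hcc, hone⟩ := one_rep n (N + d) hn
  refine ⟨N, by omega, fun α => (δ * cc α) • (1 : Matrix (Fin t) (Fin t) ℝ) +
    if (∀ k, (α k).1 + (α k).2 = m) then κ (fun k => (α k).1) • B (fun k => (α k).1) else 0, ?_, ?_⟩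
  · intro α _
    refine Matrix.PosDef.add_posSemidef (Matrix.PosDef.one.smul (mul_pos hδ (hcc α))) ?_
    split_ifs with h
    · refine (hBpsd _ ?_).smul (hκ0 _)
      rw [Fintype.mem_piFinset]
      intro k
      have := h k
      rw [mem_range]; omega
    · exact Matrix.PosSemidef.zero
  · ext1 i j
    change F i j = (∑ α ∈ idx n (N + d), pw n α • _ : Matrix _ _ _) i j
    have e1 : F i j = F' i j + MvPolynomial.C (if i = j then δ else 0) * 1 := by simp [F']
    rw [e1, hone, (hb i j).1, Matrix.sum_apply]
    have e2 : ∑ a ∈ Fintype.piFinset (fun _ : Fin n => range (m + 1)),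
        MvPolynomial.C (b (F' i j) a) * bw n m a = ∑ α ∈ idx n (N + d),
          if (∀ k, (α k).1 + (α k).2 = m) then
            MvPolynomial.C (κ (fun k => (α k).1) * B (fun k => (α k).1) i j) * pw n α else 0 := by
      rw [← sum_filter]
      refine sum_bij' (fun a _ => fun k => (a k, m - a k)) (fun α _ => fun k => (α k).1) ?_ ?_ ?_ ?_ ?_
      · intro a ha
        have h1 : ∀ k, a k + (m - a k) = m := fun k => by
          have := mem_range.1 (Fintype.mem_piFinset.1 ha k)
          omega
        rw [mem_filter, mem_idx]
        refine ⟨?_, h1⟩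
        simp only [h1]
        simp [hN]
      · intro α hα
        rw [mem_filter] at hα
        rw [Fintype.mem_piFinset]
        intro k
        have := hα.2 k
        rw [mem_range]; omega
      · intro a _
        rfl
      · intro α hα
        rw [mem_filter] at hα
        funext k
        have := hα.2 k
        ext
        · rfl
        · simp only; omega
      · intro a _
        rw [hκ]
        simp only [B, Matrix.of_apply, map_mul]
        ring
    rw [e2, mul_sum, ← sum_add_distrib]
    refine sum_congr rfl fun α _ => ?_
    rw [Matrix.smul_apply, Matrix.map_apply]
    beta_reduce
    rw [Matrix.add_apply, Matrix.smul_apply, Matrix.one_apply, map_add]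
    split_ifs <;> simp <;> ring
end
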